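/- arXiv:1806.06668 — 2 statements merged into one kernel-verified Lean document; each statement's English description precedes it below -/
import Mathlib

section
/- For every u ∈ ℂ with |u| ≤ u_c, the series Z_q(u) := Σ_{p≥0} z_{p,q}·u^p converges absolutely for every q ≥ 0, the series A(u) := Σ_{p≥0} a_p·u^p converges absolutely, and Z_q(u) ~ (A(u)/Γ(−4/3)) · u_c^{−q} · q^{−7/3} as q → ∞, where Γ denotes the Gamma function. -/
noncomputable def nuc : ℝ := 1 + 2 * Real.sqrt 7

noncomputable def tc : ℝ := Real.sqrt 10 / (8 * (7 + Real.sqrt 7) ^ ((3:ℝ)/2))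

noncomputable def uc : ℝ := (6/5) * (7 + Real.sqrt 7) * tc

/-- The rational parametrization `û` of the `u`-variable. -/
noncomputable def uhat (H : ℂ) : ℂ :=
  ((uc : ℂ) / 3) * H * (10 - 12 * H + 6 * H ^ 2 - H ^ 3)

/-- The rational parametrization `Ẑ₀`. -/
noncomputable def Z0hat (H : ℂ) : ℂ :=
  (1/10) * (1 - (1 - (Real.sqrt 7 : ℂ)) * H + 3 * H ^ 2 - H ^ 3)
    * (10 - 12 * H + 6 * H ^ 2 - H ^ 3)

/-- The rational parametrization `Ẑ₁`. -/
noncomputable def Z1hat (H : ℂ) : ℂ :=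
  (3 / (10 * (uc : ℂ))) *
    ((Real.sqrt 7 : ℂ) - 1 + H - 3 * (4 - 3 * H + H ^ 2) / (10 - 12 * H + 6 * H ^ 2 - H ^ 3))

/-- The rational parametrization `Â`. -/
noncomputable def Ahat (H : ℂ) : ℂ :=
  (1/10) * ((((3:ℝ)/2) ^ ((7:ℝ)/3) : ℝ) : ℂ) * (9 - 8 * H + 3 * H ^ 2) / (3 - 3 * H + H ^ 2) ^ 2

/-- The rational parametrization of the unit disc, `û(1 - k) = u_c * param k`. -/
noncomputable def param (k : ℂ) : ℂ := 1 - k ^ 3 * (2 + k) / 3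

/-- The closed sector `|arg k| ≤ π / 6`. -/
def sector : Set ℂ := {k | 0 ≤ k.re ∧ 3 * k.im ^ 2 ≤ k.re ^ 2}

/-- The open sector `|arg k| < π / 6`. -/
def openSector : Set ℂ := {k | 0 < k.re ∧ 3 * k.im ^ 2 < k.re ^ 2}

lemma openSector_subset_sector : openSector ⊆ sector := fun _ hk => ⟨hk.1.le, hk.2.le⟩

lemma isClosed_sector : IsClosed sector :=
  (isClosed_le continuous_const Complex.continuous_re).inter
    (isClosed_le (f := fun k : ℂ => 3 * k.im ^ 2) (g := fun k : ℂ => k.re ^ 2)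
      (by fun_prop) (by fun_prop))

lemma isOpen_openSector : IsOpen openSector :=
  (isOpen_lt continuous_const Complex.continuous_re).inter
    (isOpen_lt (f := fun k : ℂ => 3 * k.im ^ 2) (g := fun k : ℂ => k.re ^ 2)
      (by fun_prop) (by fun_prop))

lemma re_mul_nonneg_of_mem_sector {k l : ℂ} (hk : k ∈ sector) (hl : l ∈ sector) :
    (k.re * l.re) * (2 / 3) ≤ (k * l).re ∧ |k.im * l.im| ≤ k.re * l.re / 3 := by
  obtain ⟨hk0, hk1⟩ := hk
  obtain ⟨hl0, hl1⟩ := hl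
  have key : |k.im * l.im| ≤ k.re * l.re / 3 := by
    apply abs_le_of_sq_le_sq _ (by positivity)
    have : (3 * k.im ^ 2) * (3 * l.im ^ 2) ≤ k.re ^ 2 * l.re ^ 2 :=
      mul_le_mul hk1 hl1 (by positivity) (by positivity)
    nlinarith
  refine ⟨?_, key⟩
  rw [Complex.mul_re]
  have := (abs_le.1 key).2
  linarith

/-- The product of three elements of the sector has nonnegative real part. -/
lemma re_mul_mul_nonneg {k l m : ℂ} (hk : k ∈ sector) (hl : l ∈ sector) (hm : m ∈ sector) :
    0 ≤ (k * l * m).re := by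
  obtain ⟨hk0, hk1⟩ := hk
  obtain ⟨hl0, hl1⟩ := hl
  obtain ⟨hm0, hm1⟩ := hm
  have h1 := re_mul_nonneg_of_mem_sector ⟨hk0, hk1⟩ ⟨hl0, hl1⟩
  have h2 := re_mul_nonneg_of_mem_sector ⟨hk0, hk1⟩ ⟨hm0, hm1⟩
  have h3 := re_mul_nonneg_of_mem_sector ⟨hl0, hl1⟩ ⟨hm0, hm1⟩
  have e1 := (abs_le.1 h1.2).2
  have e2 := (abs_le.1 h2.2).2
  have e3 := (abs_le.1 h3.2).2
  have : (k * l * m).re = k.re * l.re * m.re - (k.im * l.im) * m.re - (k.im * m.im) * l.re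
      - (l.im * m.im) * k.re := by
    simp only [Complex.mul_re, Complex.mul_im]; ring
  rw [this]
  nlinarith [mul_le_mul_of_nonneg_right e1 hm0, mul_le_mul_of_nonneg_right e2 hl0,
    mul_le_mul_of_nonneg_right e3 hk0]

lemma re_mul_nonneg {k l : ℂ} (hk : k ∈ sector) (hl : l ∈ sector) : 0 ≤ (k * l).re :=
  le_trans (by have := mul_nonneg hk.1 hl.1; linarith) (re_mul_nonneg_of_mem_sector hk hl).1

lemma eq_zero_of_mem_sector {k : ℂ} (hk : k ∈ sector) (h : k.re = 0) : k = 0 := by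
  have h2 := hk.2
  rw [h] at h2
  have : k.im = 0 := by nlinarith [sq_nonneg k.im]
  exact Complex.ext h this

lemma param_injOn : Set.InjOn param sector := by
  intro k hk l hl h
  have h1 : (k - l) * ((k * k * k + k * k * l + k * l * l + l * l * l)
      + 2 * (k * k + k * l + l * l)) = 0 := by
    unfold param at h
    linear_combination (-3 : ℂ) * h
  rcases mul_eq_zero.1 h1 with h2 | h2
  · exact sub_eq_zero.1 h2
  · have h3 := congrArg Complex.re h2
    simp only [Complex.add_re, Complex.mul_re (2 : ℂ), Complex.re_ofNat, Complex.im_ofNat,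
      Complex.zero_re] at h3
    have a1 := re_mul_mul_nonneg hk hk hk
    have a2 := re_mul_mul_nonneg hk hk hl
    have a3 := re_mul_mul_nonneg hk hl hl
    have a4 := re_mul_mul_nonneg hl hl hl
    have b1 := (re_mul_nonneg_of_mem_sector hk hk).1
    have b2 := re_mul_nonneg hk hl
    have b3 := (re_mul_nonneg_of_mem_sector hl hl).1
    have c1 : k.re = 0 := by nlinarith [mul_self_nonneg k.re, mul_self_nonneg l.re]
    have c2 : l.re = 0 := by nlinarith [mul_self_nonneg k.re, mul_self_nonneg l.re]
    rw [eq_zero_of_mem_sector hk c1, eq_zero_of_mem_sector hl c2]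

lemma mem_openSector_of_norm_param_lt {k : ℂ} (hk : k ∈ sector) (h : ‖param k‖ < 1) :
    k ∈ openSector := by
  have hre : (param k).re < 1 := lt_of_le_of_lt (Complex.re_le_norm _) h
  obtain ⟨h0, h1⟩ := hk
  refine ⟨lt_of_le_of_ne h0 fun h => ?_, lt_of_le_of_ne h1 fun h => ?_⟩
  · have : k = 0 := eq_zero_of_mem_sector ⟨h0, h1⟩ h.symm
    simp [this, param] at hre
  · have : (param k).re = 1 - (k.re * (k.re ^ 2 - 3 * k.im ^ 2) * (2 + k.re)
        - k.im * (3 * k.re ^ 2 - k.im ^ 2) * k.im) / 3 := by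
      have e : param k = 1 - ((k * k * k * (2 + k)) * ((1 / 3 : ℝ) : ℂ)) := by
        unfold param; push_cast; ring
      rw [e]
      simp only [Complex.mul_re, Complex.mul_im, Complex.add_re, Complex.add_im, Complex.sub_re,
        Complex.ofReal_re, Complex.ofReal_im, Complex.one_re, Complex.re_ofNat, Complex.im_ofNat]
      ring
    rw [this, h] at hre
    nlinarith [sq_nonneg (k.im ^ 2), sq_nonneg k.im, sq_nonneg (k.re * k.im)]

lemma norm_le_of_norm_param_le {k : ℂ} (hk : k ∈ sector) (h : ‖param k‖ ≤ 1) :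
    ‖k‖ ^ 2 ≤ 3 := by
  have h1 : ‖k‖ ^ 3 * ‖2 + k‖ ≤ 6 := by
    have : ‖k ^ 3 * (2 + k)‖ ≤ 6 := by
      have e : k ^ 3 * (2 + k) = 3 * (1 - param k) := by unfold param; ring
      rw [e, norm_mul]
      have := norm_sub_le 1 (param k)
      simp only [Complex.norm_ofNat, norm_one] at *
      linarith
    simpa [norm_mul, norm_pow] using this
  have h2 : 2 ≤ ‖2 + k‖ := by
    have := Complex.re_le_norm (2 + k)
    simp only [Complex.add_re, Complex.re_ofNat] at this
    linarith [hk.1]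
  by_contra! h3
  have h4 : 0 ≤ ‖k‖ := norm_nonneg k
  have h5 : 1 < ‖k‖ := by nlinarith
  have h6 : 3 < ‖k‖ ^ 3 := by nlinarith
  nlinarith

lemma hasStrictDerivAt_param (k : ℂ) :
    HasStrictDerivAt param (-(2 / 3) * k ^ 2 * (3 + 2 * k)) k := by
  have h : HasStrictDerivAt (fun k : ℂ => 1 - k ^ 3 * (2 + k) / 3)
      (-((3 * k ^ 2 * (2 + k) + k ^ 3 * 1) / 3)) k := by
    have h1 : HasStrictDerivAt (fun k : ℂ => k ^ 3) (3 * k ^ 2) k := by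
      simpa using hasStrictDerivAt_pow 3 k
    have h2 : HasStrictDerivAt (fun k : ℂ => 2 + k) 1 k := (hasStrictDerivAt_id k).const_add 2
    exact ((h1.mul h2).div_const 3).const_sub 1
  have e : -(2 / 3) * k ^ 2 * (3 + 2 * k) = -((3 * k ^ 2 * (2 + k) + k ^ 3 * 1) / 3) := by ring
  rw [e]
  exact h

lemma ne_zero_of_mem_openSector {k : ℂ} (hk : k ∈ openSector) : k ≠ 0 := by
  rintro rfl
  simpa using hk.1

lemma deriv_param_ne_zero {k : ℂ} (hk : k ∈ openSector) :
    -(2 / 3) * k ^ 2 * (3 + 2 * k) ≠ 0 := by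
  have h2 : 3 + 2 * k ≠ 0 := fun h => by
    have := congrArg Complex.re h
    simp at this
    linarith [hk.1]
  exact mul_ne_zero (mul_ne_zero (by norm_num) (pow_ne_zero 2 (ne_zero_of_mem_openSector hk))) h2

lemma continuous_param : Continuous param := by unfold param; fun_prop

lemma isOpen_image_param {V : Set ℂ} (hV : IsOpen V) (hs : V ⊆ openSector) :
    IsOpen (param '' V) := by
  rw [isOpen_iff_mem_nhds]
  rintro _ ⟨k, hk, rfl⟩
  rw [← (hasStrictDerivAt_param k).map_nhds_eq (deriv_param_ne_zero (hs hk))]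
  exact Filter.image_mem_map (hV.mem_nhds hk)

/-- Every sequence of points of the sector with parameters in the closed unit disc
has a subsequence converging in the sector. -/
lemma isCompact_sector_inter : IsCompact {k | k ∈ sector ∧ ‖k‖ ^ 2 ≤ 3} := by
  refine Metric.isCompact_of_isClosed_isBounded
    (isClosed_sector.inter (isClosed_le (f := fun k : ℂ => ‖k‖ ^ 2) (g := fun _ => 3)
      (by fun_prop) (by fun_prop))) ?_
  refine (Metric.isBounded_closedBall (x := (0 : ℂ)) (r := 2)).subset fun k hk => ?_
  rw [mem_closedBall_zero_iff]
  nlinarith [hk.2, norm_nonneg k]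

lemma ball_subset_image_param : Metric.ball (0 : ℂ) 1 ⊆ param '' openSector := by
  refine (convex_ball (0 : ℂ) 1).isPreconnected.subset_of_closure_inter_subset
    (isOpen_image_param isOpen_openSector subset_rfl) ⟨0, by simp, 1, ?_, ?_⟩ ?_
  · simp [openSector]
  · simp [param]; norm_num
  · rintro x ⟨hx, hx1⟩
    rw [mem_ball_zero_iff] at hx1
    have hcl : x ∈ closure (param '' openSector ∩ Metric.ball 0 1) := by
      have := Metric.isOpen_ball.inter_closure (s := Metric.ball (0 : ℂ) 1)
        (t := param '' openSector) ⟨by simpa using hx1, hx⟩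
      rwa [Set.inter_comm] at this
    have hK : IsClosed (param '' {k | k ∈ sector ∧ ‖k‖ ^ 2 ≤ 3}) :=
      (isCompact_sector_inter.image continuous_param).isClosed
    obtain ⟨k, hk, rfl⟩ : x ∈ param '' {k | k ∈ sector ∧ ‖k‖ ^ 2 ≤ 3} := by
      refine hK.closure_subset_iff.2 ?_ hcl
      rintro _ ⟨⟨k, hk, rfl⟩, hk1⟩
      rw [mem_ball_zero_iff] at hk1
      exact ⟨k, ⟨openSector_subset_sector hk,
        norm_le_of_norm_param_le (openSector_subset_sector hk) hk1.le⟩, rfl⟩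
    exact ⟨k, mem_openSector_of_norm_param_lt hk.1 hx1, rfl⟩

/-- The inverse of `param` on the open unit disc. -/
noncomputable def unparam : ℂ → ℂ := Function.invFunOn param openSector

lemma unparam_mem {x : ℂ} (hx : ‖x‖ < 1) : unparam x ∈ openSector :=
  Function.invFunOn_mem (ball_subset_image_param (mem_ball_zero_iff.2 hx))

lemma param_unparam {x : ℂ} (hx : ‖x‖ < 1) : param (unparam x) = x :=
  Function.invFunOn_eq (ball_subset_image_param (mem_ball_zero_iff.2 hx))

lemma unparam_mem_compact {x : ℂ} (hx : ‖x‖ < 1) :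
    unparam x ∈ {k | k ∈ sector ∧ ‖k‖ ^ 2 ≤ 3} :=
  ⟨openSector_subset_sector (unparam_mem hx), norm_le_of_norm_param_le
    (openSector_subset_sector (unparam_mem hx)) (by rw [param_unparam hx]; exact hx.le)⟩

lemma unparam_param {k : ℂ} (hk : k ∈ openSector) : unparam (param k) = k :=
  (param_injOn.mono openSector_subset_sector).leftInvOn_invFunOn hk

lemma unparam_zero : unparam 0 = 1 := by
  have h : param 1 = 0 := by simp [param]; norm_num
  rw [← h]
  exact unparam_param (by simp [openSector])

lemma continuousAt_unparam {x : ℂ} (hx : ‖x‖ < 1) : ContinuousAt unparam x := by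
  intro V hV
  obtain ⟨W, hWV, hW, hxW⟩ := mem_nhds_iff.1 hV
  have hop := isOpen_image_param (hW.inter isOpen_openSector) Set.inter_subset_right
  have hmem : x ∈ param '' (W ∩ openSector) := ⟨unparam x, ⟨hxW, unparam_mem hx⟩, param_unparam hx⟩
  rw [Filter.mem_map]
  filter_upwards [hop.mem_nhds hmem]
  rintro _ ⟨k, hk, rfl⟩
  rw [Set.mem_preimage, unparam_param hk.2]
  exact hWV hk.1

lemma hasDerivAt_unparam {x : ℂ} (hx : ‖x‖ < 1) :
    HasDerivAt unparam (-(2 / 3) * unparam x ^ 2 * (3 + 2 * unparam x))⁻¹ x := by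
  refine HasDerivAt.of_local_left_inverse (continuousAt_unparam hx)
    (hasStrictDerivAt_param _).hasDerivAt (deriv_param_ne_zero (unparam_mem hx)) ?_
  filter_upwards [Metric.isOpen_ball.mem_nhds (mem_ball_zero_iff.2 hx)] with y hy
  exact param_unparam (mem_ball_zero_iff.1 hy)

lemma differentiableOn_unparam : DifferentiableOn ℂ unparam (Metric.ball 0 1) := fun _ hx =>
  (hasDerivAt_unparam (mem_ball_zero_iff.1 hx)).differentiableAt.differentiableWithinAt

/-- Every point of the closed unit disc has a parameter which is a limit of parameters
of points of the open disc. -/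
lemma exists_tendsto_unparam {x : ℂ} (hx : ‖x‖ ≤ 1) :
    ∃ k ∈ {k | k ∈ sector ∧ ‖k‖ ^ 2 ≤ 3}, ∃ v : ℕ → ℂ, (∀ n, ‖v n‖ < 1) ∧
      Filter.Tendsto v Filter.atTop (nhds x) ∧
      Filter.Tendsto (fun n => unparam (v n)) Filter.atTop (nhds k) := by
  have hcl : x ∈ closure (Metric.ball (0 : ℂ) 1) := by
    rw [closure_ball 0 one_ne_zero]; simpa using hx
  obtain ⟨v, hv, hvx⟩ := mem_closure_iff_seq_limit.1 hcl
  simp only [mem_ball_zero_iff] at hv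
  obtain ⟨k, hk, φ, hφ, hlim⟩ := isCompact_sector_inter.tendsto_subseq
    (fun n => unparam_mem_compact (hv n))
  exact ⟨k, hk, v ∘ φ, fun n => hv _, hvx.comp hφ.tendsto_atTop, hlim⟩

/-- The `n`-th Taylor coefficient of `f` at `0`. -/
noncomputable def taylorCoeff (f : ℂ → ℂ) (n : ℕ) : ℂ := ((n.factorial : ℂ))⁻¹ * iteratedDeriv n f 0

lemma hasSum_taylorCoeff {f : ℂ → ℂ} (hf : DifferentiableOn ℂ f (Metric.ball 0 1)) {y : ℂ}
    (hy : ‖y‖ < 1) : HasSum (fun n => taylorCoeff f n * y ^ n) (f y) := by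
  have := Complex.hasSum_taylorSeries_on_ball hf (mem_ball_zero_iff.2 hy)
  refine this.congr_fun fun n => ?_
  simp only [taylorCoeff, sub_zero, smul_eq_mul]
  ring

lemma hasFPowerSeriesAt_ofScalars {f : ℂ → ℂ} {c : ℕ → ℂ}
    (h : ∀ᶠ y in nhds (0 : ℂ), HasSum (fun n => c n * y ^ n) (f y)) :
    HasFPowerSeriesAt f (FormalMultilinearSeries.ofScalars ℂ c) 0 := by
  rw [hasFPowerSeriesAt_iff]
  filter_upwards [h] with y hy
  simpa [FormalMultilinearSeries.coeff_ofScalars, mul_comm] using hy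

lemma coeff_eq_of_hasSum {f : ℂ → ℂ} {c c' : ℕ → ℂ}
    (h : ∀ᶠ y in nhds (0 : ℂ), HasSum (fun n => c n * y ^ n) (f y))
    (h' : ∀ᶠ y in nhds (0 : ℂ), HasSum (fun n => c' n * y ^ n) (f y)) : c = c' := by
  have e := (hasFPowerSeriesAt_ofScalars h).eq_formalMultilinearSeries
    (hasFPowerSeriesAt_ofScalars h')
  funext n
  have := congrArg (fun p => FormalMultilinearSeries.coeff p n) e
  simpa [FormalMultilinearSeries.coeff_ofScalars] using this

lemma eventually_norm_lt_one : ∀ᶠ y in nhds (0 : ℂ), ‖y‖ < 1 := by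
  filter_upwards [Metric.ball_mem_nhds (0 : ℂ) one_pos] with y hy
  exact mem_ball_zero_iff.1 hy

lemma eq_taylorCoeff_of_hasSum {f : ℂ → ℂ} (hf : DifferentiableOn ℂ f (Metric.ball 0 1))
    {c : ℕ → ℂ} (h : ∀ᶠ y in nhds (0 : ℂ), HasSum (fun n => c n * y ^ n) (f y)) :
    c = taylorCoeff f := by
  refine coeff_eq_of_hasSum h ?_
  filter_upwards [eventually_norm_lt_one] with y hy
  exact hasSum_taylorCoeff hf hy

lemma taylorCoeff_of_hasDerivAt {f g : ℂ → ℂ}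
    (h : ∀ y : ℂ, ‖y‖ < 1 → HasDerivAt f (g y) y) (n : ℕ) :
    taylorCoeff g n = (n + 1) * taylorCoeff f (n + 1) := by
  have e : g =ᶠ[nhds 0] deriv f := by
    filter_upwards [eventually_norm_lt_one] with y hy
    exact (h y hy).deriv.symm
  unfold taylorCoeff
  rw [e.iteratedDeriv_eq, iteratedDeriv_succ', Nat.factorial_succ]
  have : ((n.factorial : ℂ)) ≠ 0 := by exact_mod_cast n.factorial_ne_zero
  have : (n : ℂ) + 1 ≠ 0 := by exact_mod_cast n.succ_ne_zero
  push_cast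
  field_simp

lemma norm_taylorCoeff_le {f : ℂ → ℂ} (hf : DifferentiableOn ℂ f (Metric.ball 0 1)) {M : ℝ}
    (hM : ∀ y : ℂ, ‖y‖ < 1 → ‖f y‖ ≤ M) (n : ℕ) : ‖taylorCoeff f n‖ ≤ M := by
  have hr : ∀ r : ℝ, 0 < r → r < 1 → ‖taylorCoeff f n‖ * r ^ n ≤ M := by
    intro r h0 h1
    have := Complex.norm_iteratedDeriv_le_of_forall_mem_sphere_norm_le (f := f) (c := 0) n h0
      (C := M) ((hf.mono (Metric.closedBall_subset_ball h1)).diffContOnCl_ball subset_rfl)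
      (fun z hz => hM z (by rw [mem_sphere_zero_iff_norm.1 hz]; exact h1))
    have hn : (0 : ℝ) < n.factorial := by exact_mod_cast n.factorial_pos
    unfold taylorCoeff
    rw [norm_mul, norm_inv, Complex.norm_natCast]
    rw [le_div_iff₀ (by positivity)] at this
    rw [mul_assoc, inv_mul_le_iff₀ hn]
    exact this
  have hlim : Filter.Tendsto (fun r : ℝ => ‖taylorCoeff f n‖ * r ^ n) (nhdsWithin 1 (Set.Iio 1))
      (nhds (‖taylorCoeff f n‖ * 1 ^ n)) :=
    ((continuous_const.mul (continuous_pow n)).tendsto 1).mono_left nhdsWithin_le_nhds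
  rw [one_pow, mul_one] at hlim
  refine le_of_tendsto hlim ?_
  filter_upwards [Ioo_mem_nhdsLT (zero_lt_one (α := ℝ))] with r hmem
  exact hr r hmem.1 hmem.2

/-- Nonnegative Taylor coefficients of a bounded holomorphic function on the unit disc
are summable. -/
lemma summable_of_bounded_of_nonneg {f : ℂ → ℂ} (hf : DifferentiableOn ℂ f (Metric.ball 0 1))
    {M : ℝ} (hM : ∀ y : ℂ, ‖y‖ < 1 → ‖f y‖ ≤ M) {c : ℕ → ℝ} (hc : ∀ n, 0 ≤ c n)
    (h : ∀ᶠ y in nhds (0 : ℂ), HasSum (fun n => (c n : ℂ) * y ^ n) (f y)) : Summable c := by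
  have hct := eq_taylorCoeff_of_hasSum hf h
  refine summable_of_sum_range_le (c := M) hc fun N => ?_
  have hr : ∀ r : ℝ, 0 < r → r < 1 → ∑ n ∈ Finset.range N, c n * r ^ n ≤ M := by
    intro r h0 h1
    have hr1 : ‖(r : ℂ)‖ < 1 := by rwa [Complex.norm_real, Real.norm_of_nonneg h0.le]
    have hs := hasSum_taylorCoeff hf hr1
    rw [← hct] at hs
    have hs' := Complex.hasSum_re hs
    have e : (fun n => ((c n : ℂ) * (r : ℂ) ^ n).re) = fun n => c n * r ^ n := by
      funext n
      rw [← Complex.ofReal_pow, ← Complex.ofReal_mul, Complex.ofReal_re]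
    rw [e] at hs'
    calc ∑ n ∈ Finset.range N, c n * r ^ n ≤ (f r).re :=
          sum_le_hasSum _ (fun n _ => mul_nonneg (hc n) (by positivity)) hs'
      _ ≤ ‖f r‖ := Complex.re_le_norm _
      _ ≤ M := hM _ hr1
  have hlim : Filter.Tendsto (fun r : ℝ => ∑ n ∈ Finset.range N, c n * r ^ n)
      (nhdsWithin 1 (Set.Iio 1)) (nhds (∑ n ∈ Finset.range N, c n * 1 ^ n)) := by
    have : Continuous fun r : ℝ => ∑ n ∈ Finset.range N, c n * r ^ n := by fun_prop
    exact (this.tendsto 1).mono_left nhdsWithin_le_nhds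
  simp only [one_pow, mul_one] at hlim
  refine le_of_tendsto hlim ?_
  filter_upwards [Ioo_mem_nhdsLT (zero_lt_one (α := ℝ))] with r hmem
  exact hr r hmem.1 hmem.2

/-- Asymptotics of the coefficients of `(1 - y) ^ (-σ)`. -/
lemma tendsto_of_recurrence {σ : ℝ} (hσ : ∀ m : ℕ, σ ≠ -m) {g : ℕ → ℂ} (h0 : g 0 = 1)
    (hg : ∀ j : ℕ, (j + 1) * g (j + 1) = (j + σ) * g j) :
    Filter.Tendsto (fun j : ℕ => g j * (((j : ℝ) ^ (1 - σ) : ℝ) : ℂ)) Filter.atTop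
      (nhds (1 / (Real.Gamma σ : ℂ))) := by
  have hprod : ∀ j : ℕ, g j = (((∏ i ∈ Finset.range j, (σ + i)) / j.factorial : ℝ) : ℂ) := by
    intro j
    induction j with
    | zero => simp [h0]
    | succ j ih =>
      have hj : (j : ℂ) + 1 ≠ 0 := by exact_mod_cast j.succ_ne_zero
      have hf : (j.factorial : ℂ) ≠ 0 := by exact_mod_cast j.factorial_ne_zero
      have := hg j
      rw [ih] at this
      rw [Finset.prod_range_succ, Nat.factorial_succ]
      push_cast at this ⊢
      rw [eq_div_iff (by positivity)]
      field_simp at this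
      linear_combination this
  have hΓ : Real.Gamma σ ≠ 0 := Real.Gamma_ne_zero hσ
  have h1 : Filter.Tendsto (fun j : ℕ => (Real.GammaSeq σ j)⁻¹ * ((j : ℝ) / (j + σ)))
      Filter.atTop (nhds ((Real.Gamma σ)⁻¹ * 1)) := by
    refine ((Real.GammaSeq_tendsto_Gamma σ).inv₀ hΓ).mul ?_
    exact tendsto_natCast_div_add_atTop σ
  have h2 : Filter.Tendsto (fun j : ℕ => (∏ i ∈ Finset.range j, (σ + i)) / j.factorial
      * (j : ℝ) ^ (1 - σ)) Filter.atTop (nhds ((Real.Gamma σ)⁻¹ * 1)) := by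
    refine h1.congr' ?_
    filter_upwards [Filter.eventually_gt_atTop 0] with j hj
    have hj' : (0 : ℝ) < j := by exact_mod_cast hj
    have hne : (j : ℝ) + σ ≠ 0 := fun h => hσ j (by linarith)
    have hf : (j.factorial : ℝ) ≠ 0 := by exact_mod_cast j.factorial_ne_zero
    have hp : (j : ℝ) ^ σ ≠ 0 := (Real.rpow_pos_of_pos hj' σ).ne'
    rw [Real.GammaSeq, Finset.prod_range_succ, Real.rpow_sub hj', Real.rpow_one]
    have hpr : ∏ i ∈ Finset.range j, (σ + i) ≠ 0 :=
      Finset.prod_ne_zero_iff.2 fun i _ h => hσ i (by linarith)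
    have hne' : σ + j ≠ 0 := by rwa [add_comm]
    field_simp
    ring
  have h3 := (Complex.continuous_ofReal.tendsto _).comp h2
  refine (h3.congr fun j => ?_).trans ?_
  · rw [hprod j]; simp
  · simp

/-- Taylor coefficients of a branch of `(1 - y) ^ (n / 3)`. -/
lemma taylorCoeff_recurrence {f : ℂ → ℂ} (hf : DifferentiableOn ℂ f (Metric.ball 0 1)) {n : ℕ}
    (h : ∀ y : ℂ, ‖y‖ < 1 → f y ^ 3 = (1 - y) ^ n) (j : ℕ) :
    (j + 1) * taylorCoeff f (j + 1) = (j + ((-(n : ℝ) / 3 : ℝ) : ℂ)) * taylorCoeff f j := by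
  have hd : ∀ y : ℂ, ‖y‖ < 1 → HasDerivAt f (deriv f y) y := fun y hy =>
    (hf.differentiableAt (Metric.isOpen_ball.mem_nhds (mem_ball_zero_iff.2 hy))).hasDerivAt
  have hode : ∀ y : ℂ, ‖y‖ < 1 → (1 - y) * deriv f y = ((-(n : ℝ) / 3 : ℝ) : ℂ) * f y := by
    intro y hy
    have hy1 : (1 : ℂ) - y ≠ 0 := fun h => by
      rw [← sub_eq_zero.1 h] at hy; simp at hy
    have e : (fun y => f y ^ 3) =ᶠ[nhds y] fun y => (1 - y) ^ n := by
      filter_upwards [Metric.isOpen_ball.mem_nhds (mem_ball_zero_iff.2 hy)] with w hw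
      exact h w (mem_ball_zero_iff.1 hw)
    have d1 := (hd y hy).pow 3
    have d2 : HasDerivAt (fun y : ℂ => (1 - y) ^ n) (n * (1 - y) ^ (n - 1) * (-1)) y :=
      ((hasDerivAt_id y).const_sub 1).pow n
    have d3 := (d1.congr_of_eventuallyEq e.symm).unique d2
    have hfy : f y ≠ 0 := fun h0 => by
      have := h y hy
      rw [h0] at this
      exact pow_ne_zero n hy1 (by simpa using this.symm)
    have hn : (n : ℂ) * (1 - y) ^ (n - 1) * (1 - y) = n * (1 - y) ^ n := by
      cases n with
      | zero => simp
      | succ n => simp [pow_succ, mul_assoc]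
    have h3 : f y ^ 2 * (3 * ((1 - y) * deriv f y) + n * f y) = 0 := by
      have hy3 := h y hy
      push_cast at d3
      norm_num at d3
      linear_combination (1 - y) * d3 + hn * (-1) + n * hy3
    have h4 := (mul_eq_zero.1 h3).resolve_left (pow_ne_zero 2 hfy)
    push_cast
    linear_combination h4 / 3
  have hdd : DifferentiableOn ℂ (deriv f) (Metric.ball 0 1) := hf.deriv Metric.isOpen_ball
  have key : (fun j : ℕ => (j + 1) * taylorCoeff f (j + 1) - j * taylorCoeff f j)
      = fun j => ((-(n : ℝ) / 3 : ℝ) : ℂ) * taylorCoeff f j := by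
    refine coeff_eq_of_hasSum (f := fun y => ((-(n : ℝ) / 3 : ℝ) : ℂ) * f y) ?_ ?_
    · filter_upwards [eventually_norm_lt_one] with y hy
      have s1 := hasSum_taylorCoeff hdd hy
      simp only [taylorCoeff_of_hasDerivAt hd] at s1
      have s2 : HasSum (fun j : ℕ => j * taylorCoeff f j * y ^ j) (y * deriv f y) := by
        rw [← hasSum_nat_add_iff' 1]
        have := s1.mul_left y
        simp only [Finset.range_one, Finset.sum_singleton, Nat.cast_zero, zero_mul, sub_zero]
        refine this.congr_fun fun j => ?_
        push_cast
        ring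
      have := s1.sub s2
      have e : deriv f y - y * deriv f y = ((-(n : ℝ) / 3 : ℝ) : ℂ) * f y := by
        rw [← hode y hy]; ring
      rw [e] at this
      refine this.congr_fun fun j => ?_
      ring
    · filter_upwards [eventually_norm_lt_one] with y hy
      have := (hasSum_taylorCoeff hf hy).mul_left (((-(n : ℝ) / 3 : ℝ) : ℂ))
      refine this.congr_fun fun j => ?_
      ring
  have := congrFun key j
  linear_combination this

/-- The function `θ` such that `k * θ k` is a cube root of `1 - param k`. -/
noncomputable def cubeRootFactor (k : ℂ) : ℂ := ((2 + k) / 3) ^ ((1 / 3 : ℝ) : ℂ)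

lemma cubeRootFactor_pow_three (k : ℂ) : cubeRootFactor k ^ 3 = (2 + k) / 3 := by
  unfold cubeRootFactor
  rw [← Complex.cpow_nat_mul]
  norm_num

lemma mul_cubeRootFactor_pow_three (k : ℂ) : (k * cubeRootFactor k) ^ 3 = 1 - param k := by
  rw [mul_pow, cubeRootFactor_pow_three, param]
  ring

lemma cubeRootFactor_zero : cubeRootFactor 0 = (((2 / 3 : ℝ) ^ (1 / 3 : ℝ) : ℝ) : ℂ) := by
  unfold cubeRootFactor
  rw [Complex.ofReal_cpow (by norm_num)]
  norm_num

lemma cubeRootFactor_one : cubeRootFactor 1 = 1 := by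
  unfold cubeRootFactor
  norm_num

lemma differentiableAt_cubeRootFactor {k : ℂ} (hk : -1 < k.re) :
    DifferentiableAt ℂ cubeRootFactor k := by
  unfold cubeRootFactor
  refine DifferentiableAt.cpow (by fun_prop) (by fun_prop) (Or.inl ?_)
  have : ((2 + k) / 3).re = (2 + k.re) / 3 := by
    have e : (2 + k) / 3 = ((1 / 3 : ℝ) : ℂ) * (2 + k) := by push_cast; ring
    rw [e, Complex.re_ofReal_mul]
    simp
    ring
  rw [this]
  linarith

/-- Expansion of a holomorphic function in powers of `k * cubeRootFactor k`. -/
lemma exists_expansion {W : Set ℂ} (hW : W ∈ nhds (0 : ℂ)) (hre : ∀ k ∈ W, -1 < k.re) (N : ℕ) :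
    ∀ (n : ℕ) (M : ℂ → ℂ), DifferentiableOn ℂ M W → ∃ (b : ℕ → ℂ) (Q : ℂ → ℂ),
      (0 < N → b 0 = M 0 / cubeRootFactor 0 ^ n) ∧ DifferentiableOn ℂ Q W ∧
      ∀ k ∈ W, k ^ n * M k
        = ∑ i ∈ Finset.range N, b i * (k * cubeRootFactor k) ^ (n + i) + k ^ (n + N) * Q k := by
  induction N with
  | zero => exact fun n M hM => ⟨0, M, by simp, hM, by simp⟩
  | succ N ih =>
    intro n M hM
    have hθ0 : cubeRootFactor 0 ≠ 0 := fun h => by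
      have := cubeRootFactor_pow_three 0
      rw [h] at this
      norm_num at this
    set c := M 0 / cubeRootFactor 0 ^ n with hc
    set G : ℂ → ℂ := fun k => M k - c * cubeRootFactor k ^ n with hG
    have hGd : DifferentiableOn ℂ G W := fun k hk => (hM k hk).sub
      (((differentiableAt_cubeRootFactor (hre k hk)).pow n).differentiableWithinAt.const_mul c)
    have hG0 : G 0 = 0 := by
      simp only [hG, hc]
      field_simp
      simp
    obtain ⟨b, Q, -, hQ, hb⟩ := ih (n + 1) (dslope G 0)
      ((Complex.differentiableOn_dslope hW).2 hGd)
    refine ⟨fun i => Nat.casesOn i c b, Q, fun _ => rfl, hQ, fun k hk => ?_⟩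
    have h1 : k * dslope G 0 k = G k := by
      have := sub_smul_dslope G 0 k
      simpa [hG0] using this
    have h2 := hb k hk
    rw [Finset.sum_range_succ']
    change k ^ n * M k = (∑ i ∈ Finset.range N, b i * (k * cubeRootFactor k) ^ (n + (i + 1))
      + c * (k * cubeRootFactor k) ^ n) + k ^ (n + (N + 1)) * Q k
    have h3 : ∑ i ∈ Finset.range N, b i * (k * cubeRootFactor k) ^ (n + (i + 1))
        = ∑ i ∈ Finset.range N, b i * (k * cubeRootFactor k) ^ (n + 1 + i) :=
      Finset.sum_congr rfl fun i _ => by rw [add_assoc, add_comm i 1]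
    rw [h3, show n + (N + 1) = n + 1 + N by ring]
    have h4 : M k = k * dslope G 0 k + c * cubeRootFactor k ^ n := by rw [h1]; simp [hG]
    rw [h4, mul_pow]
    linear_combination h2

/-- Differentiating `k ^ (n + 3) * Q k` along the inverse parametrization lowers the power of `k`
by three. -/
lemma exists_hasDerivAt_comp_unparam {W : Set ℂ} (hW : IsOpen W) (hre : ∀ k ∈ W, -1 < k.re)
    (hmem : ∀ y : ℂ, ‖y‖ < 1 → unparam y ∈ W) {Q : ℂ → ℂ} (hQ : DifferentiableOn ℂ Q W) (n : ℕ) :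
    ∃ R : ℂ → ℂ, DifferentiableOn ℂ R W ∧ ∀ y : ℂ, ‖y‖ < 1 →
      HasDerivAt (fun y => unparam y ^ (n + 3) * Q (unparam y)) (unparam y ^ n * R (unparam y))
        y := by
  have hne : ∀ k ∈ W, 3 + 2 * k ≠ 0 := fun k hk h => by
    have := congrArg Complex.re h
    simp at this
    linarith [hre k hk]
  refine ⟨fun k => ((n + 3) * Q k + k * deriv Q k) * (-(3 / 2)) / (3 + 2 * k), ?_, fun y hy => ?_⟩
  · have hdQ := hQ.deriv hW
    refine DifferentiableOn.div ?_ (by fun_prop) hne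
    fun_prop
  · have hl := hasDerivAt_unparam hy
    have hy' := hmem y hy
    have h1 := hne _ hy'
    have h2 := ne_zero_of_mem_openSector (unparam_mem hy)
    have hq : HasDerivAt Q (deriv Q (unparam y)) (unparam y) :=
      (hQ.differentiableAt (hW.mem_nhds hy')).hasDerivAt
    have := (hl.pow (n + 3)).mul (hq.comp y hl)
    refine this.congr_deriv ?_
    simp only [Pi.pow_apply, Function.comp_apply]
    rw [show n + 3 - 1 = n + 2 by omega]
    push_cast
    field_simp
    ring

lemma isLittleO_of_bounded_third_derivative {f f₁ f₂ f₃ : ℂ → ℂ}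
    (h₁ : ∀ y : ℂ, ‖y‖ < 1 → HasDerivAt f (f₁ y) y)
    (h₂ : ∀ y : ℂ, ‖y‖ < 1 → HasDerivAt f₁ (f₂ y) y)
    (h₃ : ∀ y : ℂ, ‖y‖ < 1 → HasDerivAt f₂ (f₃ y) y)
    (hf₃ : DifferentiableOn ℂ f₃ (Metric.ball 0 1)) {C : ℝ}
    (hC : ∀ y : ℂ, ‖y‖ < 1 → ‖f₃ y‖ ≤ C) :
    Filter.Tendsto (fun q : ℕ => taylorCoeff f q * (((q : ℝ) ^ (7 / 3 : ℝ) : ℝ) : ℂ)) Filter.atTop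
      (nhds 0) := by
  have hb : ∀ n : ℕ, ‖taylorCoeff f (n + 3)‖ ≤ C * ((n : ℝ) + 1)⁻¹ ^ 3 := by
    intro n
    have e1 := taylorCoeff_of_hasDerivAt h₁ (n + 2)
    have e2 := taylorCoeff_of_hasDerivAt h₂ (n + 1)
    have e3 := taylorCoeff_of_hasDerivAt h₃ n
    have hn := norm_taylorCoeff_le hf₃ hC n
    rw [e3, e2, e1] at hn
    have hx : ∀ a : ℕ, ‖((n : ℂ) + 1 + a)‖ = (n : ℝ) + 1 + a := fun a => by
      have : ((n : ℂ) + 1 + a) = ((n + 1 + a : ℕ) : ℂ) := by push_cast; ring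
      rw [this, Complex.norm_natCast]
      push_cast
      ring
    have hn' : ((n : ℝ) + 1) * (((n : ℝ) + 1 + 1) * (((n : ℝ) + 1 + 2)
        * ‖taylorCoeff f (n + 3)‖)) ≤ C := by
      have i0 := hx 0
      have i1 := hx 1
      have i2 := hx 2
      simp only [Nat.cast_zero, add_zero, Nat.cast_one, Nat.cast_ofNat] at i0 i1 i2
      rw [norm_mul, norm_mul, norm_mul, i0] at hn
      push_cast at hn
      rw [i1, show (n : ℂ) + 2 + 1 = n + 1 + 2 by ring, i2] at hn
      exact hn
    have hpos : (0 : ℝ) < (n : ℝ) + 1 := by positivity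
    rw [inv_pow, ← div_eq_mul_inv, le_div_iff₀ (by positivity)]
    refine le_trans ?_ hn'
    have ht := norm_nonneg (taylorCoeff f (n + 3))
    have h0 : (0 : ℝ) ≤ n := Nat.cast_nonneg n
    have : ((n : ℝ) + 1) ^ 3 ≤ ((n : ℝ) + 1) * (((n : ℝ) + 1 + 1) * ((n : ℝ) + 1 + 2)) := by
      nlinarith [sq_nonneg (n : ℝ)]
    nlinarith [mul_le_mul_of_nonneg_right this ht]
  rw [← Filter.tendsto_add_atTop_iff_nat 3]
  have hlim : Filter.Tendsto (fun n : ℕ => C * 4 ^ (7 / 3 : ℝ) * ((n : ℝ) + 1) ^ (-(2 / 3 : ℝ)))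
      Filter.atTop (nhds (C * 4 ^ (7 / 3 : ℝ) * 0)) := by
    refine Filter.Tendsto.const_mul _ ((tendsto_rpow_neg_atTop (by norm_num)).comp ?_)
    exact Filter.tendsto_atTop_add_const_right _ _ tendsto_natCast_atTop_atTop
  rw [mul_zero] at hlim
  refine squeeze_zero_norm (fun n => ?_) hlim
  have hpos : (0 : ℝ) < (n : ℝ) + 1 := by positivity
  have h0 : (0 : ℝ) ≤ n := Nat.cast_nonneg n
  have hp : ((n + 3 : ℕ) : ℝ) ^ (7 / 3 : ℝ) ≤ 4 ^ (7 / 3 : ℝ) * ((n : ℝ) + 1) ^ (7 / 3 : ℝ) := by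
    rw [← Real.mul_rpow (by norm_num) hpos.le]
    refine Real.rpow_le_rpow (by positivity) ?_ (by norm_num)
    push_cast
    linarith
  rw [norm_mul, Complex.norm_real, Real.norm_of_nonneg (by positivity)]
  have hCpos : 0 ≤ C * ((n : ℝ) + 1)⁻¹ ^ 3 := le_trans (norm_nonneg _) (hb n)
  calc _ ≤ (C * ((n : ℝ) + 1)⁻¹ ^ 3) * (4 ^ (7 / 3 : ℝ) * ((n : ℝ) + 1) ^ (7 / 3 : ℝ)) :=
        mul_le_mul (hb n) hp (by positivity) hCpos
    _ = C * 4 ^ (7 / 3 : ℝ) * ((n : ℝ) + 1) ^ (-(2 / 3 : ℝ)) := by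
        have : ((n : ℝ) + 1)⁻¹ ^ 3 * ((n : ℝ) + 1) ^ (7 / 3 : ℝ)
            = ((n : ℝ) + 1) ^ (-(2 / 3 : ℝ)) := by
          rw [inv_pow, ← Real.rpow_natCast, ← Real.rpow_neg hpos.le, ← Real.rpow_add hpos]
          norm_num
        rw [← this]
        ring

/-- The power `(k * cubeRootFactor k) ^ n` along the inverse parametrization. -/
noncomputable def cubeRootPow (n : ℕ) (y : ℂ) : ℂ := (unparam y * cubeRootFactor (unparam y)) ^ n

lemma differentiableOn_cubeRootPow (n : ℕ) :
    DifferentiableOn ℂ (cubeRootPow n) (Metric.ball 0 1) := by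
  have h2 : DifferentiableOn ℂ (fun y => cubeRootFactor (unparam y)) (Metric.ball 0 1) :=
    fun y hy => by
      refine DifferentiableAt.comp_differentiableWithinAt y
        (differentiableAt_cubeRootFactor ?_) (differentiableOn_unparam y hy)
      linarith [(unparam_mem (mem_ball_zero_iff.1 hy)).1]
  exact (differentiableOn_unparam.mul h2).pow n

lemma cubeRootPow_recurrence (n j : ℕ) :
    (j + 1) * taylorCoeff (cubeRootPow n) (j + 1)
      = (j + ((-(n : ℝ) / 3 : ℝ) : ℂ)) * taylorCoeff (cubeRootPow n) j := by
  refine taylorCoeff_recurrence (differentiableOn_cubeRootPow n) (fun y hy => ?_) j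
  unfold cubeRootPow
  rw [← pow_mul, mul_comm n 3, pow_mul, mul_cubeRootFactor_pow_three, param_unparam hy]

lemma taylorCoeff_cubeRootPow_zero (n : ℕ) : taylorCoeff (cubeRootPow n) 0 = 1 := by
  simp [taylorCoeff, cubeRootPow, unparam_zero, cubeRootFactor_one]

lemma tendsto_taylorCoeff_cubeRootPow {n : ℕ} (hn : ¬ 3 ∣ n) :
    Filter.Tendsto (fun j : ℕ => taylorCoeff (cubeRootPow n) j
      * (((j : ℝ) ^ (1 - -(n : ℝ) / 3) : ℝ) : ℂ)) Filter.atTop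
      (nhds (1 / (Real.Gamma (-(n : ℝ) / 3) : ℂ))) := by
  refine tendsto_of_recurrence (fun m h => hn ?_) (taylorCoeff_cubeRootPow_zero n)
    (cubeRootPow_recurrence n)
  refine ⟨m, ?_⟩
  have : (n : ℝ) = 3 * m := by linarith
  exact_mod_cast this

/-- If the recurrence multiplier vanishes somewhere, all later coefficients vanish. -/
lemma taylorCoeff_cubeRootPow_eq_zero (m : ℕ) {j : ℕ} (hj : m < j) :
    taylorCoeff (cubeRootPow (3 * m)) j = 0 := by
  induction j, hj using Nat.le_induction with
  | base =>
    have := cubeRootPow_recurrence (3 * m) m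
    have e : (m : ℂ) + ((-((3 * m : ℕ) : ℝ) / 3 : ℝ) : ℂ) = 0 := by push_cast; ring
    rw [e, zero_mul] at this
    exact (mul_eq_zero.1 this).resolve_left (by exact_mod_cast m.succ_ne_zero)
  | succ j _ ih =>
    have := cubeRootPow_recurrence (3 * m) j
    rw [ih, mul_zero] at this
    exact (mul_eq_zero.1 this).resolve_left (by exact_mod_cast j.succ_ne_zero)

lemma tendsto_taylorCoeff_cubeRootPow_of_lt {n : ℕ} (hn : 4 < n) :
    Filter.Tendsto (fun j : ℕ => taylorCoeff (cubeRootPow n) j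
      * (((j : ℝ) ^ (7 / 3 : ℝ) : ℝ) : ℂ)) Filter.atTop (nhds 0) := by
  by_cases h3 : 3 ∣ n
  · obtain ⟨m, rfl⟩ := h3
    refine tendsto_const_nhds.congr' ?_
    filter_upwards [Filter.eventually_gt_atTop m] with j hj
    rw [taylorCoeff_cubeRootPow_eq_zero m hj, zero_mul]
  · have h1 := tendsto_taylorCoeff_cubeRootPow h3
    have hn' : (4 : ℝ) < n := by exact_mod_cast hn
    have h2 : Filter.Tendsto (fun j : ℕ => (((j : ℝ) ^ (-(((n : ℝ) - 4) / 3)) : ℝ) : ℂ))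
        Filter.atTop (nhds ((0 : ℝ) : ℂ)) :=
      (Complex.continuous_ofReal.tendsto _).comp
        ((tendsto_rpow_neg_atTop (by linarith)).comp tendsto_natCast_atTop_atTop)
    have h12 := h1.mul h2
    rw [Complex.ofReal_zero, mul_zero] at h12
    refine h12.congr' ?_
    filter_upwards [Filter.eventually_gt_atTop 0] with j hj
    have hj' : (0 : ℝ) < j := by exact_mod_cast hj
    rw [mul_assoc, ← Complex.ofReal_mul, ← Real.rpow_add hj']
    congr 3
    ring

/-- Transfer theorem: coefficient asymptotics of a function of the inverse parametrization whose
singular expansion starts with a fourth power. -/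
theorem tendsto_coeff_of_singular_expansion {m d : ℂ → ℂ} (hm : Differentiable ℂ m)
    (hd : Differentiable ℂ d) (hd0 : ∀ k ∈ {k | k ∈ sector ∧ ‖k‖ ^ 2 ≤ 3}, d k ≠ 0)
    {t : ℕ → ℂ} {b₀ b₁ : ℂ}
    (ht : ∀ y : ℂ, ‖y‖ < 1 → HasSum (fun q => t q * y ^ q)
      (b₀ + b₁ * (1 - y) + unparam y ^ 4 * (m (unparam y) / d (unparam y)))) :
    Filter.Tendsto (fun q : ℕ => t q * (((q : ℝ) ^ (7 / 3 : ℝ) : ℝ) : ℂ)) Filter.atTop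
      (nhds (m 0 / d 0 / cubeRootFactor 0 ^ 4 * (1 / (Real.Gamma (-4 / 3) : ℂ)))) := by
  set W : Set ℂ := {k | -1 < k.re ∧ d k ≠ 0} with hWdef
  have hWo : IsOpen W := (isOpen_lt continuous_const Complex.continuous_re).inter
    (isOpen_ne_fun hd.continuous continuous_const)
  have hsub : {k | k ∈ sector ∧ ‖k‖ ^ 2 ≤ 3} ⊆ W := fun k hk => ⟨by linarith [hk.1.1], hd0 k hk⟩
  have hre : ∀ k ∈ W, -1 < k.re := fun k hk => hk.1
  have h0 : W ∈ nhds (0 : ℂ) := hWo.mem_nhds (hsub ⟨by simp [sector], by simp⟩)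
  have hmem : ∀ y : ℂ, ‖y‖ < 1 → unparam y ∈ W := fun y hy => hsub (unparam_mem_compact hy)
  obtain ⟨b, Q, hb0, hQ, hexp⟩ := exists_expansion h0 hre 5 4 (fun k => m k / d k)
    (hm.differentiableOn.div hd.differentiableOn fun k hk => hk.2)
  obtain ⟨Q₁, hQ₁, hd₁⟩ := exists_hasDerivAt_comp_unparam hWo hre hmem hQ 6
  obtain ⟨Q₂, hQ₂, hd₂⟩ := exists_hasDerivAt_comp_unparam hWo hre hmem hQ₁ 3
  obtain ⟨Q₃, hQ₃, hd₃⟩ := exists_hasDerivAt_comp_unparam hWo hre hmem hQ₂ 0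
  have hdiff₃ : DifferentiableOn ℂ (fun y => unparam y ^ 0 * Q₃ (unparam y))
      (Metric.ball 0 1) :=
    (differentiableOn_unparam.pow 0).mul
      (hQ₃.comp differentiableOn_unparam fun y hy => hmem y (mem_ball_zero_iff.1 hy))
  obtain ⟨C, hC⟩ := isCompact_sector_inter.exists_bound_of_continuousOn
    (hQ₃.continuousOn.mono hsub)
  have hrem := isLittleO_of_bounded_third_derivative hd₁ hd₂ hd₃ hdiff₃ (C := C)
    (fun y hy => by simpa using hC _ (unparam_mem_compact hy))
  set rem : ℂ → ℂ := fun y => unparam y ^ (6 + 3) * Q (unparam y) with hremdef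
  have hremd : DifferentiableOn ℂ rem (Metric.ball 0 1) := fun y hy =>
    (hd₁ y (mem_ball_zero_iff.1 hy)).differentiableAt.differentiableWithinAt
  have hcoef : t = fun q => (∑ i ∈ Finset.range 5, b i * taylorCoeff (cubeRootPow (4 + i)) q
      + taylorCoeff rem q) + (b₀ + b₁) * (if q = 0 then 1 else 0)
      - b₁ * (if q = 1 then 1 else 0) := by
    refine coeff_eq_of_hasSum (f := fun y => b₀ + b₁ * (1 - y)
      + unparam y ^ 4 * (m (unparam y) / d (unparam y))) ?_ ?_
    · filter_upwards [eventually_norm_lt_one] with y hy using ht y hy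
    · filter_upwards [eventually_norm_lt_one] with y hy
      have s1 : HasSum (fun q : ℕ => ∑ i ∈ Finset.range 5,
          b i * (taylorCoeff (cubeRootPow (4 + i)) q * y ^ q))
          (∑ i ∈ Finset.range 5, b i * cubeRootPow (4 + i) y) :=
        hasSum_sum fun i _ =>
          (hasSum_taylorCoeff (differentiableOn_cubeRootPow (4 + i)) hy).mul_left (b i)
      have s2 := hasSum_taylorCoeff hremd hy
      have s3 : HasSum (fun q : ℕ => (if q = 0 then (b₀ + b₁) * y ^ q else 0))
          ((b₀ + b₁) * y ^ 0) := hasSum_ite_eq 0 _ |>.congr_fun fun q => by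
            split_ifs with h <;> simp [h]
      have s4 : HasSum (fun q : ℕ => (if q = 1 then b₁ * y ^ q else 0))
          (b₁ * y ^ 1) := hasSum_ite_eq 1 _ |>.congr_fun fun q => by
            split_ifs with h <;> simp [h]
      have s := ((s1.add s2).add s3).sub s4
      have e := hexp (unparam y) (hmem y hy)
      have e' : b₀ + b₁ * (1 - y) + unparam y ^ 4 * (m (unparam y) / d (unparam y))
          = ∑ i ∈ Finset.range 5, b i * cubeRootPow (4 + i) y + rem y + (b₀ + b₁) * y ^ 0
            - b₁ * y ^ 1 := by
        rw [e]
        simp only [cubeRootPow, hremdef]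
        ring
      rw [e']
      refine s.congr_fun fun q => ?_
      rw [sub_mul, add_mul, add_mul, Finset.sum_mul]
      congr 1
      · congr 1
        · congr 1
          exact Finset.sum_congr rfl fun i _ => by ring
        · split_ifs <;> simp
      · split_ifs <;> simp
  have hmain : Filter.Tendsto (fun q : ℕ => ∑ i ∈ Finset.range 5,
      b i * (taylorCoeff (cubeRootPow (4 + i)) q * (((q : ℝ) ^ (7 / 3 : ℝ) : ℝ) : ℂ)))
      Filter.atTop (nhds (∑ i ∈ Finset.range 5,
        b i * (if i = 0 then 1 / (Real.Gamma (-4 / 3) : ℂ) else 0))) := by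
    refine tendsto_finsetSum _ fun i _ => Filter.Tendsto.const_mul _ ?_
    rcases Nat.eq_zero_or_pos i with rfl | hi
    · have := tendsto_taylorCoeff_cubeRootPow (n := 4) (by norm_num)
      norm_num at this ⊢
      exact this
    · rw [if_neg hi.ne']
      exact tendsto_taylorCoeff_cubeRootPow_of_lt (by omega)
  have hlim : ∑ i ∈ Finset.range 5, b i * (if i = 0 then 1 / (Real.Gamma (-4 / 3) : ℂ) else 0) + 0
      = m 0 / d 0 / cubeRootFactor 0 ^ 4 * (1 / (Real.Gamma (-4 / 3) : ℂ)) := by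
    simp [hb0 (by norm_num)]
  rw [← hlim]
  refine (hmain.add hrem).congr' ?_
  filter_upwards [Filter.eventually_gt_atTop 1] with q hq
  rw [hcoef]
  simp only [if_neg (show q ≠ 0 by omega), if_neg (show q ≠ 1 by omega), mul_zero, add_zero,
    sub_zero, add_mul, Finset.sum_mul, mul_assoc]

/-- The denominator of `Ẑ(1 - h, 1 - k)`. -/
def zDen (h k : ℂ) : ℂ :=
  (h + k) + (h * h + h * k + k * k) + (h * h * h + h * h * k + h * k * k + k * k * k)
    + (h * k) * (h * k)

/-- Ten times the numerator of `Ẑ(1 - h, 1 - k)`, where `w` stands for `√7`. -/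
def zNum (w h k : ℂ) : ℂ :=
  (h + k + k ^ 2) * ((3 + 6 * w) * (1 + h + h ^ 2) - (4 + 2 * w) * h ^ 3 - 3 * w * h ^ 4
      + (3 - 3 * w) * h ^ 5 + (5 - w) * h ^ 6 + 4 * h ^ 7 + h ^ 8)
    + k ^ 3 * (3 + 6 * w - (4 + 2 * w) * (h + h ^ 2) + (1 - 4 * w) * h ^ 3 + (3 - w) * h ^ 4
      + 3 * h ^ 5 + h ^ 6)
    + k ^ 4 * (-(4 + 2 * w) - 3 * w * (h + h ^ 2) + (3 - w) * h ^ 3 + h ^ 4)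
    + k ^ 5 * (-3 * w + (3 - 3 * w) * (h + h ^ 2) + 3 * h ^ 3)
    + k ^ 6 * (3 - 3 * w + (5 - w) * (h + h ^ 2) + h ^ 3)
    + k ^ 7 * (5 - w + 4 * (h + h ^ 2)) + k ^ 8 * (4 + h + h ^ 2) + k ^ 9

lemma uhat_one_sub (k : ℂ) : uhat (1 - k) = uc * param k := by
  unfold uhat param
  ring

lemma sqrt_seven_sq : (Real.sqrt 7 : ℂ) ^ 2 = 7 := by
  rw [← Complex.ofReal_pow, Real.sq_sqrt (by norm_num)]
  norm_num

lemma tc_pos : 0 < tc := by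
  unfold tc
  positivity

lemma uc_pos : 0 < uc := by
  unfold uc
  have := tc_pos
  positivity

lemma uc_sq : 40 * (7 + Real.sqrt 7) * uc ^ 2 = 9 := by
  have hp : (0 : ℝ) < 7 + Real.sqrt 7 := by positivity
  have h1 : ((7 + Real.sqrt 7) ^ ((3 : ℝ) / 2)) ^ 2 = (7 + Real.sqrt 7) ^ 3 := by
    rw [← Real.rpow_natCast, ← Real.rpow_mul hp.le, ← Real.rpow_natCast]
    norm_num
  have h2 : tc ^ 2 = 10 / (64 * (7 + Real.sqrt 7) ^ 3) := by
    unfold tc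
    rw [div_pow, mul_pow, h1, Real.sq_sqrt (by norm_num)]
    norm_num
  unfold uc
  rw [mul_pow, mul_pow, h2]
  field_simp
  norm_num

lemma tc_eq : 6 * (7 + Real.sqrt 7) * tc = 5 * uc := by
  unfold uc
  ring

/-- The functional equation, with all spurious factors made explicit. -/
lemma kernel_equation {h k Z : ℂ} (hh : 3 + 3 * h + 3 * h ^ 2 + h ^ 3 ≠ 0)
    (hk : 3 + 3 * k + 3 * k ^ 2 + k ^ 3 ≠ 0)
    (H : ((nuc : ℂ) * uhat (1 - k) * uhat (1 - h) - uhat (1 - h) ^ 2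
          - ((nuc : ℂ) ^ 2 - 1) * (tc : ℂ) * uhat (1 - k)
            * (Z0hat (1 - h) + uhat (1 - h) * Z1hat (1 - k)))
          * (Z - Z0hat (1 - k))
        = uhat (1 - h) ^ 2 * (Z0hat (1 - k) - Z0hat (1 - h))
          + ((nuc : ℂ) ^ 2 - 1) * uhat (1 - h) * uhat (1 - k)
            * (uhat (1 - h) ^ 2 - (tc : ℂ) * Z0hat (1 - h) * Z1hat (1 - k))) :
    ((1 - h) ^ 2 + ((1 - k) ^ 2 - 3 * (1 - k)) * (1 - h) + (1 - k))
      * (10 * Z * zDen h k - zNum (Real.sqrt 7) h k) = 0 := by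
  have hU : (uc : ℂ) ≠ 0 := by exact_mod_cast uc_pos.ne'
  have hw := sqrt_seven_sq
  have hU2 : 40 * (7 + (Real.sqrt 7 : ℂ)) * (uc : ℂ) ^ 2 = 9 := by exact_mod_cast uc_sq
  have hT : 6 * (7 + (Real.sqrt 7 : ℂ)) * (tc : ℂ) = 5 * uc := by exact_mod_cast tc_eq
  have hnu : (nuc : ℂ) = 1 + 2 * (Real.sqrt 7 : ℂ) := by unfold nuc; push_cast; ring
  rw [hnu, uhat_one_sub, uhat_one_sub] at H
  unfold Z0hat Z1hat at H
  generalize (Real.sqrt 7 : ℂ) = w at *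
  generalize (uc : ℂ) = U at *
  generalize (tc : ℂ) = T at *
  have hA : ((1 + 2 * w) ^ 2 - 1) * T = 10 / 3 * U := by
    linear_combination (2 / 3 : ℂ) * hT + 4 * T * hw
  have hB : ((1 + 2 * w) ^ 2 - 1) * U ^ 2 = 9 / 10 := by
    linear_combination (1 / 10 : ℂ) * hU2 + 4 * U ^ 2 * hw
  have hden : 10 - 12 * (1 - k) + 6 * (1 - k) ^ 2 - (1 - k) ^ 3
      = 3 + 3 * k + 3 * k ^ 2 + k ^ 3 := by ring
  have hparam : param k = (1 - k) * (3 + 3 * k + 3 * k ^ 2 + k ^ 3) / 3 := by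
    unfold param; ring
  rw [hden] at H
  set P := 3 + 3 * k + 3 * k ^ 2 + k ^ 3 with hP
  set X := ((1 + 2 * w) ^ 2 - 1) * T * (U * param k)
    * (3 / (10 * U) * (w - 1 + (1 - k) - 3 * (4 - 3 * (1 - k) + (1 - k) ^ 2) / P)) with hX
  have hX' : X = U * (param k * (w - k) - (1 - k) * (4 - 3 * (1 - k) + (1 - k) ^ 2)) := by
    rw [hX, hA, hparam]
    field_simp
    ring
  have hmul : (3 + 3 * h + 3 * h ^ 2 + h ^ 3) * U ^ 2
      * (((1 - h) ^ 2 + ((1 - k) ^ 2 - 3 * (1 - k)) * (1 - h) + (1 - k))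
        * (10 * Z * zDen h k - zNum w h k)) = 0 := by
    set z0h := 1 / 10 * (1 - (1 - w) * (1 - h) + 3 * (1 - h) ^ 2 - (1 - h) ^ 3)
      * (10 - 12 * (1 - h) + 6 * (1 - h) ^ 2 - (1 - h) ^ 3) with hz0h
    set z0k := 1 / 10 * (1 - (1 - w) * (1 - k) + 3 * (1 - k) ^ 2 - (1 - k) ^ 3) * P with hz0k
    have H1 : ((1 + 2 * w) * (U * param k) * (U * param h) - (U * param h) ^ 2
        - 10 / 3 * U * (U * param k) * z0h - U * param h * X) * (Z - z0k)
        = (U * param h) ^ 2 * (z0k - z0h) + 9 / 10 * U ^ 2 * param h ^ 3 * param k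
          - U * param h * z0h * X := by
      linear_combination H + U * param k * z0h * (Z - z0k) * hA
        + U ^ 2 * param h ^ 3 * param k * hB
    rw [hX'] at H1
    simp only [hz0h, hz0k, hP] at H1
    unfold param zDen zNum at *
    linear_combination (-90 : ℂ) * H1
      + 27 * U ^ 2 * (1 - h ^ 3 * (2 + h) / 3) ^ 2 * (1 - k ^ 3 * (2 + k) / 3) * hw
  exact (mul_eq_zero.1 hmul).resolve_left (mul_ne_zero hh (pow_ne_zero 2 hU))

lemma re_sq_ge {k : ℂ} (hk : k ∈ sector) : ‖k‖ ^ 2 / 2 ≤ (k * k).re := by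
  rw [Complex.sq_norm, Complex.normSq_apply, Complex.mul_re]
  nlinarith [hk.2]

lemma re_zDen_pos {h k : ℂ} (hh : h ∈ {k | k ∈ sector ∧ ‖k‖ ^ 2 ≤ 3})
    (hk : k ∈ {k | k ∈ sector ∧ ‖k‖ ^ 2 ≤ 3}) (hne : 0 < h.re + k.re) : 0 < (zDen h k).re := by
  obtain ⟨hh, hh3⟩ := hh
  obtain ⟨hk, hk3⟩ := hk
  have a1 := re_mul_mul_nonneg hh hh hh
  have a2 := re_mul_mul_nonneg hh hh hk
  have a3 := re_mul_mul_nonneg hh hk hk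
  have a4 := re_mul_mul_nonneg hk hk hk
  have b1 := re_sq_ge hh
  have b3 := re_sq_ge hk
  have b2 := re_mul_nonneg hh hk
  have hQP : (h * k).im ^ 2 ≤ 3 * (h * k).re ^ 2 := by
    have hp := (re_mul_nonneg_of_mem_sector hh hk).1
    have hac : 0 ≤ h.re * k.re := mul_nonneg hh.1 hk.1
    have h1 : (h.re * k.re * (2 / 3)) ^ 2 ≤ (h * k).re ^ 2 := pow_le_pow_left₀ (by positivity) hp 2
    have h2 : (h * k).im ^ 2 ≤ 2 * ((h.re * k.im) ^ 2 + (h.im * k.re) ^ 2) := by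
      rw [Complex.mul_im]
      nlinarith [sq_nonneg (h.re * k.im - h.im * k.re)]
    have h3 : (h.re * k.im) ^ 2 * 3 ≤ (h.re * k.re) ^ 2 := by
      nlinarith [mul_le_mul_of_nonneg_left hk.2 (sq_nonneg h.re)]
    have h4 : (h.im * k.re) ^ 2 * 3 ≤ (h.re * k.re) ^ 2 := by
      nlinarith [mul_le_mul_of_nonneg_left hh.2 (sq_nonneg k.re)]
    nlinarith
  have hnp : ‖h * k‖ ^ 2 = (h * k).re ^ 2 + (h * k).im ^ 2 := by
    rw [Complex.sq_norm, Complex.normSq_apply]; ring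
  have c1 : ‖h * k‖ ≤ 2 * (h * k).re := by
    apply le_of_sq_le_sq _ (by linarith)
    rw [hnp]; nlinarith
  have c2 : ‖h * k‖ ≤ (‖h‖ ^ 2 + ‖k‖ ^ 2) / 2 := by
    rw [norm_mul]; nlinarith [sq_nonneg (‖h‖ - ‖k‖)]
  have c3 : -(‖h * k‖ ^ 2 / 2) ≤ ((h * k) * (h * k)).re := by
    rw [hnp, Complex.mul_re (h * k)]; nlinarith
  have c4 : ‖h * k‖ ≤ 3 := by linarith
  have c5 : ‖h * k‖ ^ 2 ≤ 3 * ‖h * k‖ := by nlinarith [norm_nonneg (h * k)]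
  unfold zDen
  simp only [Complex.add_re]
  linarith

lemma zDen_ne_zero {h k : ℂ} (hh : h ∈ {k | k ∈ sector ∧ ‖k‖ ^ 2 ≤ 3})
    (hk : k ∈ {k | k ∈ sector ∧ ‖k‖ ^ 2 ≤ 3}) (hne : h ≠ 0 ∨ k ≠ 0) : zDen h k ≠ 0 := by
  intro h0
  refine absurd (re_zDen_pos hh hk ?_) (by simp [h0])
  rcases hne with h' | h'
  · have := lt_of_le_of_ne hh.1.1 fun e => h' (eq_zero_of_mem_sector hh.1 e.symm)
    linarith [hk.1.1]
  · have := lt_of_le_of_ne hk.1.1 fun e => h' (eq_zero_of_mem_sector hk.1 e.symm)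
    linarith [hh.1.1]

lemma one_add_add_sq_ne_zero {k : ℂ} (hk : k ∈ sector) : 1 + k + k ^ 2 ≠ 0 := fun h => by
  have := congrArg Complex.re h
  rw [pow_two] at this
  simp only [Complex.add_re, Complex.one_re, Complex.zero_re] at this
  linarith [re_mul_nonneg hk hk, hk.1]

/-- The singular expansion of `Ẑ(1 - h, 1 - k)` at `k = 0`. -/
lemma exists_singular_expansion (w : ℂ) {h : ℂ} (hh : h ∈ {k | k ∈ sector ∧ ‖k‖ ^ 2 ≤ 3}) :
    ∃ (m d : ℂ → ℂ) (b₀ b₁ : ℂ), Differentiable ℂ m ∧ Differentiable ℂ d ∧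
      (∀ k ∈ {k | k ∈ sector ∧ ‖k‖ ^ 2 ≤ 3}, d k ≠ 0) ∧
      m 0 / d 0 = 3 / 20 * (4 + 2 * h + 3 * h ^ 2) / (1 + h + h ^ 2) ^ 2 ∧
      ∀ k ∈ {k | k ∈ sector ∧ ‖k‖ ^ 2 ≤ 3}, k ≠ 0 → ∀ Z : ℂ, 10 * Z * zDen h k = zNum w h k →
        Z = b₀ + b₁ * (1 - param k) + k ^ 4 * (m k / d k) := by
  by_cases h0 : h = 0
  · subst h0
    refine ⟨fun k => 6 + k * 9 + k ^ 2 * 7 + k ^ 3 * 4 + k ^ 4,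
      fun k => 10 * (1 + k + k ^ 2), (3 + 6 * w) / 10, -(3 / 20) * (4 + 2 * w), by fun_prop,
      by fun_prop, fun k hk => mul_ne_zero (by norm_num) (one_add_add_sq_ne_zero hk.1), by norm_num,
      fun k hk hk0 Z hZ => ?_⟩
    have he := one_add_add_sq_ne_zero hk.1
    have hZ' : k * (10 * Z * (1 + k + k ^ 2)) = zNum w 0 k := by
      rw [← hZ]; unfold zDen; ring
    have hZ2 : 10 * Z * (1 + k + k ^ 2) = zNum w 0 k / k := by
      rw [← hZ']; field_simp
    have : Z = zNum w 0 k / k / (10 * (1 + k + k ^ 2)) := by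
      rw [← hZ2]; field_simp
    rw [this]
    unfold zNum param
    field_simp
    ring
  · have he := one_add_add_sq_ne_zero hh.1
    obtain ⟨e, hedef⟩ : ∃ e, e = 1 + h + h ^ 2 := ⟨_, rfl⟩
    obtain ⟨B₀, hB₀⟩ : ∃ B, B = ((3 + 6 * w) * (1 + h + h ^ 2) - (4 + 2 * w) * h ^ 3
      - 3 * w * h ^ 4 + (3 - 3 * w) * h ^ 5 + (5 - w) * h ^ 6 + 4 * h ^ 7 + h ^ 8) / e := ⟨_, rfl⟩
    obtain ⟨B₁, hB₁⟩ : ∃ B, B = (3 + 6 * w - (4 + 2 * w) * (h + h ^ 2) + (1 - 4 * w) * h ^ 3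
      + (3 - w) * h ^ 4 + 3 * h ^ 5 + h ^ 6 - B₀) / (h * e) := ⟨_, rfl⟩
    have he' : e ≠ 0 := by rwa [hedef]
    refine ⟨fun k => (-(4 + 2 * w) - 3 * w * (h + h ^ 2) + (3 - w) * h ^ 3 + h ^ 4
        - B₁ * e * (1 + h / 2))
      + k * (-3 * w + (3 - 3 * w) * (h + h ^ 2) + 3 * h ^ 3 - 3 / 2 * e * B₁)
      + k ^ 2 * (3 - 3 * w + (5 - w) * (h + h ^ 2) + h ^ 3 - B₁ * (1 + e / 2))
      + k ^ 3 * (5 - w + 4 * (h + h ^ 2) - B₁ / 2) + k ^ 4 * (4 + h + h ^ 2) + k ^ 5,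
      fun k => 10 * zDen h k, B₀ / 10, 3 / 20 * B₁, by fun_prop, by unfold zDen; fun_prop,
      fun k hk => mul_ne_zero (by norm_num) (zDen_ne_zero hh hk (Or.inl h0)), ?_,
      fun k hk hk0 Z hZ => ?_⟩
    · have hd : zDen h 0 = h * e := by rw [hedef]; unfold zDen; ring
      simp only [hd, hB₁, hB₀]
      field_simp
      rw [hedef]
      ring
    · have hD := zDen_ne_zero hh hk (Or.inl h0)
      have : Z = zNum w h k / (10 * zDen h k) := by rw [← hZ]; field_simp
      rw [this]
      have e1 : B₀ * e = (3 + 6 * w) * (1 + h + h ^ 2) - (4 + 2 * w) * h ^ 3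
          - 3 * w * h ^ 4 + (3 - 3 * w) * h ^ 5 + (5 - w) * h ^ 6 + 4 * h ^ 7 + h ^ 8 := by
        rw [hB₀]; field_simp
      have e2 : B₁ * (h * e) = 3 + 6 * w - (4 + 2 * w) * (h + h ^ 2) + (1 - 4 * w) * h ^ 3
          + (3 - w) * h ^ 4 + 3 * h ^ 5 + h ^ 6 - B₀ := by
        rw [hB₁]; field_simp
      have hDe : zDen h k = h * e + e * k + e * k ^ 2 + k ^ 3 := by
        rw [hedef]; unfold zDen; ring
      have hpar : 1 - param k = k ^ 3 * (2 + k) / 3 := by unfold param; ring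
      rw [div_eq_iff (mul_ne_zero (by norm_num) hD), add_mul, mul_assoc (k ^ 4),
        div_mul_cancel₀ _ (mul_ne_zero (by norm_num) hD), hpar, hDe]
      unfold zNum
      linear_combination (-(h + k + k ^ 2)) * e1 - k ^ 3 * e2

lemma hasSum_antidiagonal {c : ℕ → ℕ → ℝ} {x Z : ℂ}
    (h : HasSum (fun pq : ℕ × ℕ => (c pq.1 pq.2 : ℂ) * x ^ pq.1 * x ^ pq.2) Z) :
    HasSum (fun n =>
      ((∑ pq ∈ Finset.HasAntidiagonal.antidiagonal n, c pq.1 pq.2 : ℝ) : ℂ) * x ^ n) Z := by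
  have h' := Finset.HasAntidiagonal.sigmaAntidiagonalEquivProd.hasSum_iff.2 h
  refine (h'.sigma fun n => hasSum_fintype _).congr_fun fun n => ?_
  rw [Complex.ofReal_sum, Finset.sum_mul, ← Finset.sum_coe_sort]
  refine Finset.sum_congr rfl fun pq _ => ?_
  have := Finset.HasAntidiagonal.mem_antidiagonal.1 pq.2
  simp only [Function.comp_apply, Finset.HasAntidiagonal.sigmaAntidiagonalEquivProd_apply]
  rw [mul_assoc, ← pow_add, this]

lemma summable_prod_of_summable_antidiagonal {c : ℕ → ℕ → ℝ} (hc : ∀ p q, 0 ≤ c p q)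
    (h : Summable fun n => ∑ pq ∈ Finset.HasAntidiagonal.antidiagonal n, c pq.1 pq.2) :
    Summable fun pq : ℕ × ℕ => c pq.1 pq.2 := by
  rw [← Finset.HasAntidiagonal.sigmaAntidiagonalEquivProd.summable_iff]
  refine (summable_sigma_of_nonneg fun _ => hc _ _).2 ⟨fun n => (hasSum_fintype _).summable,
    h.congr fun n => ?_⟩
  rw [tsum_fintype, ← Finset.sum_coe_sort]
  rfl

/-- The numerator `zNum w h h` divided by `h`. -/
def zNumDiag (w h : ℂ) : ℂ :=
  (2 + h) * ((3 + 6 * w) * (1 + h + h ^ 2) - (4 + 2 * w) * h ^ 3 - 3 * w * h ^ 4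
      + (3 - 3 * w) * h ^ 5 + (5 - w) * h ^ 6 + 4 * h ^ 7 + h ^ 8)
    + h ^ 2 * (3 + 6 * w - (4 + 2 * w) * (h + h ^ 2) + (1 - 4 * w) * h ^ 3 + (3 - w) * h ^ 4
      + 3 * h ^ 5 + h ^ 6)
    + h ^ 3 * (-(4 + 2 * w) - 3 * w * (h + h ^ 2) + (3 - w) * h ^ 3 + h ^ 4)
    + h ^ 4 * (-3 * w + (3 - 3 * w) * (h + h ^ 2) + 3 * h ^ 3)
    + h ^ 5 * (3 - 3 * w + (5 - w) * (h + h ^ 2) + h ^ 3)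
    + h ^ 6 * (5 - w + 4 * (h + h ^ 2)) + h ^ 7 * (4 + h + h ^ 2) + h ^ 8

lemma zNum_self (w h : ℂ) : zNum w h h = h * zNumDiag w h := by
  unfold zNum zNumDiag
  ring

lemma zDen_self (h : ℂ) : zDen h h = h * (2 + 3 * h + 4 * h ^ 2 + h ^ 3) := by
  unfold zDen
  ring

lemma differentiable_zDen (k : ℂ) : Differentiable ℂ fun h => zDen h k := by
  unfold zDen
  fun_prop

lemma differentiable_zDen_right (h : ℂ) : Differentiable ℂ fun k => zDen h k := by
  unfold zDen
  fun_prop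

lemma differentiable_zNum (w k : ℂ) : Differentiable ℂ fun h => zNum w h k := by
  unfold zNum
  fun_prop

lemma differentiable_zNum_right (w h : ℂ) : Differentiable ℂ fun k => zNum w h k := by
  unfold zNum
  fun_prop

lemma cubic_ne_zero_of_mem_sector {k : ℂ} (hk : k ∈ sector) {r s : ℝ} (hr : 0 < r) (hs : 0 ≤ s) :
    r + 3 * k + s * k ^ 2 + k ^ 3 ≠ 0 := by
  intro h
  have h' := congrArg Complex.re h
  have h2 := re_mul_nonneg hk hk
  have h3 := re_mul_mul_nonneg hk hk hk
  rw [show (r : ℂ) + 3 * k + s * k ^ 2 + k ^ 3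
    = ((r : ℝ) : ℂ) + ((3 : ℝ) : ℂ) * k + (s : ℂ) * (k * k) + k * k * k by push_cast; ring] at h'
  simp only [Complex.add_re, Complex.re_ofReal_mul, Complex.ofReal_re, Complex.zero_re] at h'
  have := mul_nonneg hs h2
  linarith [hk.1]

/-- The series `∑ c p q x ^ p y ^ q` solves the functional equation near the origin. -/
def SolvesNearZero (w : ℂ) (c : ℕ → ℕ → ℝ) (δ : ℝ) : Prop :=
  ∀ x y : ℂ, ‖x‖ < δ → ‖y‖ < δ → ∃ Z : ℂ,
    HasSum (fun pq : ℕ × ℕ => (c pq.1 pq.2 : ℂ) * x ^ pq.1 * y ^ pq.2) Z ∧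
    ((1 - unparam x) ^ 2 + ((1 - unparam y) ^ 2 - 3 * (1 - unparam y)) * (1 - unparam x)
        + (1 - unparam y))
      * (10 * Z * zDen (unparam x) (unparam y) - zNum w (unparam x) (unparam y)) = 0

lemma unparam_ne_one {x : ℂ} (hx : ‖x‖ < 1) (h0 : x ≠ 0) : unparam x ≠ 1 := by
  intro h
  have := param_unparam hx
  rw [h] at this
  apply h0
  rw [← this]
  unfold param
  norm_num

lemma exists_bound_comp_unparam {f : ℂ → ℂ}
    (hf : ContinuousOn f {k | k ∈ sector ∧ ‖k‖ ^ 2 ≤ 3}) :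
    ∃ M, ∀ x : ℂ, ‖x‖ < 1 → ‖f (unparam x)‖ ≤ M := by
  obtain ⟨M, hM⟩ := isCompact_sector_inter.exists_bound_of_continuousOn hf
  exact ⟨M, fun x hx => hM _ (unparam_mem_compact hx)⟩

lemma summable_of_solvesNearZero {w : ℂ} {c : ℕ → ℕ → ℝ} {δ : ℝ} (hδ : 0 < δ) (hδ1 : δ ≤ 1)
    (hc : ∀ p q, 0 ≤ c p q) (h : SolvesNearZero w c δ) :
    Summable fun pq : ℕ × ℕ => c pq.1 pq.2 := by
  apply summable_prod_of_summable_antidiagonal hc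
  have hden : ∀ k ∈ sector, 2 + 3 * k + 4 * k ^ 2 + k ^ 3 ≠ 0 := fun k hk => by
    simpa using cubic_ne_zero_of_mem_sector hk (r := 2) (s := 4) (by norm_num) (by norm_num)
  have hdiff : ∀ k ∈ sector, DifferentiableAt ℂ
      (fun k => zNumDiag w k / (10 * (2 + 3 * k + 4 * k ^ 2 + k ^ 3))) k := by
    intro k hk
    unfold zNumDiag
    refine DifferentiableAt.div (by fun_prop) (by fun_prop) ?_
    exact mul_ne_zero (by norm_num) (hden k hk)
  obtain ⟨M, hM⟩ := exists_bound_comp_unparam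
    (f := fun k => zNumDiag w k / (10 * (2 + 3 * k + 4 * k ^ 2 + k ^ 3)))
    fun k hk => (hdiff k hk.1).continuousAt.continuousWithinAt
  have hD : DifferentiableOn ℂ (fun x => (fun k => zNumDiag w k
      / (10 * (2 + 3 * k + 4 * k ^ 2 + k ^ 3))) (unparam x)) (Metric.ball 0 1) := by
    intro x hx
    have hx' := mem_ball_zero_iff.1 hx
    have := (hdiff _ (unparam_mem_compact hx').1).comp_differentiableWithinAt x
      (differentiableOn_unparam x hx)
    exact this
  refine summable_of_bounded_of_nonneg hD hM (fun n => Finset.sum_nonneg fun _ _ => hc _ _) ?_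
  have hball : ∀ᶠ x in nhds (0 : ℂ), ‖x‖ < δ := by
    filter_upwards [Metric.ball_mem_nhds (0 : ℂ) hδ] with x hx
    exact mem_ball_zero_iff.1 hx
  have hS : ∀ᶠ x in nhds (0 : ℂ), HasSum
      (fun n => ((∑ pq ∈ Finset.HasAntidiagonal.antidiagonal n, c pq.1 pq.2 : ℝ) : ℂ) * x ^ n)
      (∑' n, ((∑ pq ∈ Finset.HasAntidiagonal.antidiagonal n, c pq.1 pq.2 : ℝ) : ℂ) * x ^ n) := by
    filter_upwards [hball] with x hx
    obtain ⟨Z, hZ, -⟩ := h x x hx hx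
    exact (hasSum_antidiagonal hZ).summable.hasSum
  have hcont := (hasFPowerSeriesAt_ofScalars hS).continuousAt
  have hcont' := (hD.differentiableAt (Metric.ball_mem_nhds 0 one_pos)).continuousAt
  have heq := (hcont.eventuallyEq_nhds_iff_eventuallyEq_nhdsNE hcont').1 (by
    filter_upwards [self_mem_nhdsWithin, nhdsWithin_le_nhds hball] with x hx0 hx
    obtain ⟨Z, hZ, hE⟩ := h x x hx hx
    rw [(hasSum_antidiagonal hZ).tsum_eq]
    have hx1 := hx.trans_le hδ1
    have hk := unparam_mem hx1
    have h1 := unparam_ne_one hx1 hx0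
    have h0 := ne_zero_of_mem_openSector hk
    have hd := hden _ (openSector_subset_sector hk)
    generalize unparam x = k at *
    have hfac : (1 - k) * k ^ 3 ≠ 0 := mul_ne_zero (sub_ne_zero.2 h1.symm) (pow_ne_zero _ h0)
    have : (1 - k) * k ^ 3 * (Z * (10 * (2 + 3 * k + 4 * k ^ 2 + k ^ 3)) - zNumDiag w k) = 0 := by
      rw [zNum_self, zDen_self] at hE
      linear_combination hE
    rw [eq_div_iff (mul_ne_zero (by norm_num) hd)]
    exact sub_eq_zero.1 ((mul_eq_zero.1 this).resolve_left hfac))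
  filter_upwards [hS, heq] with x h1 h2
  rwa [h2] at h1

lemma norm_term_le {c : ℕ → ℕ → ℝ} (hc : ∀ p q, 0 ≤ c p q) {x y : ℂ} (hx : ‖x‖ ≤ 1)
    (hy : ‖y‖ ≤ 1) (pq : ℕ × ℕ) :
    ‖(c pq.1 pq.2 : ℂ) * x ^ pq.1 * y ^ pq.2‖ ≤ c pq.1 pq.2 := by
  rw [norm_mul, norm_mul, norm_pow, norm_pow, Complex.norm_real, Real.norm_of_nonneg (hc _ _)]
  have h1 := pow_le_one₀ (n := pq.1) (norm_nonneg x) hx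
  have h2 := pow_le_one₀ (n := pq.2) (norm_nonneg y) hy
  calc c pq.1 pq.2 * ‖x‖ ^ pq.1 * ‖y‖ ^ pq.2 ≤ c pq.1 pq.2 * 1 * 1 := by
        gcongr
        exact mul_nonneg (hc _ _) zero_le_one
        exact hc _ _
    _ = _ := by ring

/-- The double series with coefficients `c`. -/
noncomputable def doubleSeries (c : ℕ → ℕ → ℝ) (x y : ℂ) : ℂ :=
  ∑' pq : ℕ × ℕ, (c pq.1 pq.2 : ℂ) * x ^ pq.1 * y ^ pq.2

lemma hasSum_doubleSeries {c : ℕ → ℕ → ℝ} (hc : ∀ p q, 0 ≤ c p q)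
    (hs : Summable fun pq : ℕ × ℕ => c pq.1 pq.2) {x y : ℂ} (hx : ‖x‖ ≤ 1) (hy : ‖y‖ ≤ 1) :
    HasSum (fun pq : ℕ × ℕ => (c pq.1 pq.2 : ℂ) * x ^ pq.1 * y ^ pq.2) (doubleSeries c x y) :=
  (Summable.of_norm_bounded hs (norm_term_le hc hx hy)).hasSum

lemma differentiableOn_doubleSeries {c : ℕ → ℕ → ℝ} (hc : ∀ p q, 0 ≤ c p q)
    (hs : Summable fun pq : ℕ × ℕ => c pq.1 pq.2) {y : ℂ} (hy : ‖y‖ ≤ 1) :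
    DifferentiableOn ℂ (fun x => doubleSeries c x y) (Metric.ball 0 1) :=
  Complex.differentiableOn_tsum_of_summable_norm hs (fun pq => by fun_prop) Metric.isOpen_ball
    fun pq _ hx => norm_term_le hc (mem_ball_zero_iff.1 hx).le hy pq

lemma differentiableOn_doubleSeries_right {c : ℕ → ℕ → ℝ} (hc : ∀ p q, 0 ≤ c p q)
    (hs : Summable fun pq : ℕ × ℕ => c pq.1 pq.2) {x : ℂ} (hx : ‖x‖ ≤ 1) :
    DifferentiableOn ℂ (fun y => doubleSeries c x y) (Metric.ball 0 1) :=
  Complex.differentiableOn_tsum_of_summable_norm hs (fun pq => by fun_prop) Metric.isOpen_ball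
    fun pq _ hy => norm_term_le hc hx (mem_ball_zero_iff.1 hy).le pq

lemma continuousOn_doubleSeries {c : ℕ → ℕ → ℝ} (hc : ∀ p q, 0 ≤ c p q)
    (hs : Summable fun pq : ℕ × ℕ => c pq.1 pq.2) {y : ℂ} (hy : ‖y‖ ≤ 1) :
    ContinuousOn (fun x => doubleSeries c x y) (Metric.closedBall 0 1) :=
  continuousOn_tsum (fun pq => by fun_prop) hs
    fun pq _ hx => norm_term_le hc (mem_closedBall_zero_iff.1 hx) hy pq

/-- A holomorphic function on the unit disc which vanishes on a punctured neighbourhood of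
the origin vanishes identically. -/
lemma eq_zero_of_eventually_eq_zero {f : ℂ → ℂ} (hf : DifferentiableOn ℂ f (Metric.ball 0 1))
    (h : ∀ᶠ x in nhdsWithin (0 : ℂ) {0}ᶜ, f x = 0) {x : ℂ} (hx : ‖x‖ < 1) : f x = 0 :=
  (hf.analyticOnNhd Metric.isOpen_ball).eqOn_zero_of_preconnected_of_frequently_eq_zero
    (convex_ball 0 1).isPreconnected (Metric.mem_ball_self one_pos) h.frequently
    (mem_ball_zero_iff.2 hx)

lemma finite_monic_quadratic_zeros (b e : ℂ) : {H : ℂ | H ^ 2 + b * H + e = 0}.Finite := by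
  rcases Set.eq_empty_or_nonempty {H : ℂ | H ^ 2 + b * H + e = 0} with h | ⟨r, hr⟩
  · rw [h]
    exact Set.finite_empty
  · refine (Set.toFinite {r, -b - r}).subset fun H hH => ?_
    have hr' : r ^ 2 + b * r + e = 0 := hr
    have hH' : H ^ 2 + b * H + e = 0 := hH
    have : (H - r) * (H - (-b - r)) = 0 := by linear_combination hH' - hr'
    rcases mul_eq_zero.1 this with h1 | h1
    · exact Or.inl (sub_eq_zero.1 h1)
    · exact Or.inr (sub_eq_zero.1 h1)

lemma doubleSeries_mul_zDen {w : ℂ} {c : ℕ → ℕ → ℝ} {δ : ℝ} (hδ : 0 < δ) (hδ1 : δ ≤ 1)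
    (hc : ∀ p q, 0 ≤ c p q) (h : SolvesNearZero w c δ) {x y : ℂ} (hx : ‖x‖ < 1) (hy : ‖y‖ < 1) :
    10 * doubleSeries c x y * zDen (unparam x) (unparam y) = zNum w (unparam x) (unparam y) := by
  have hs := summable_of_solvesNearZero hδ hδ1 hc h
  have hball : ∀ᶠ x in nhdsWithin (0 : ℂ) {0}ᶜ, ‖x‖ < δ := by
    filter_upwards [nhdsWithin_le_nhds (Metric.ball_mem_nhds (0 : ℂ) hδ)] with x hx
    exact mem_ball_zero_iff.1 hx
  have near : ∀ y : ℂ, ‖y‖ < δ → ∀ x : ℂ, ‖x‖ < 1 →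
      10 * doubleSeries c x y * zDen (unparam x) (unparam y)
        - zNum w (unparam x) (unparam y) = 0 := by
    intro y hy x hx
    have hy1 := (hy.trans_le hδ1).le
    refine eq_zero_of_eventually_eq_zero (f := fun x => 10 * doubleSeries c x y
      * zDen (unparam x) (unparam y) - zNum w (unparam x) (unparam y)) ?_ ?_ hx
    · exact (((differentiableOn_doubleSeries hc hs hy1).const_mul 10).mul
        ((differentiable_zDen _).comp_differentiableOn differentiableOn_unparam)).sub
        ((differentiable_zNum w _).comp_differentiableOn differentiableOn_unparam)
    · have hfin := (finite_monic_quadratic_zeros ((1 - unparam y) ^ 2 - 3 * (1 - unparam y))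
        (1 - unparam y)).image fun H => param (1 - H)
      have hbad : ∀ᶠ x in nhdsWithin (0 : ℂ) {0}ᶜ, x ∉ (fun H => param (1 - H)) ''
          {H : ℂ | H ^ 2 + ((1 - unparam y) ^ 2 - 3 * (1 - unparam y)) * H
            + (1 - unparam y) = 0} := by
        have := (hfin.subset (Set.sdiff_subset (t := {0}))).isClosed.isOpen_compl.mem_nhds
          (x := (0 : ℂ)) (by simp)
        filter_upwards [nhdsWithin_le_nhds this, self_mem_nhdsWithin] with x h1 h2 h3
        exact h1 ⟨h3, h2⟩
      filter_upwards [hball, hbad] with x hx hx'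
      obtain ⟨Z, hZ, hE⟩ := h x y hx hy
      have hx1 := hx.trans_le hδ1
      have : doubleSeries c x y = Z := hZ.tsum_eq
      rw [this]
      refine (mul_eq_zero.1 hE).resolve_left fun h0 => hx' ⟨1 - unparam x, h0, ?_⟩
      simp only [sub_sub_cancel]
      exact param_unparam hx1
  refine sub_eq_zero.1 (eq_zero_of_eventually_eq_zero (f := fun y => 10 * doubleSeries c x y
      * zDen (unparam x) (unparam y) - zNum w (unparam x) (unparam y)) ?_ ?_ hy)
  · exact (((differentiableOn_doubleSeries_right hc hs hx.le).const_mul 10).mul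
        ((differentiable_zDen_right _).comp_differentiableOn differentiableOn_unparam)).sub
        ((differentiable_zNum_right w _).comp_differentiableOn differentiableOn_unparam)
  · filter_upwards [hball] with y hy
    exact near y hy x hx

lemma doubleSeries_mul_zDen_of_tendsto {w : ℂ} {c : ℕ → ℕ → ℝ} {δ : ℝ} (hδ : 0 < δ) (hδ1 : δ ≤ 1)
    (hc : ∀ p q, 0 ≤ c p q) (H : SolvesNearZero w c δ) {x y h : ℂ} (hx : ‖x‖ ≤ 1) (hy : ‖y‖ < 1)
    {v : ℕ → ℂ} (hv : ∀ n, ‖v n‖ < 1) (hvx : Filter.Tendsto v Filter.atTop (nhds x))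
    (hvh : Filter.Tendsto (fun n => unparam (v n)) Filter.atTop (nhds h)) :
    10 * doubleSeries c x y * zDen h (unparam y) = zNum w h (unparam y) := by
  have hs := summable_of_solvesNearZero hδ hδ1 hc H
  have hG : Filter.Tendsto (fun n => doubleSeries c (v n) y) Filter.atTop
      (nhds (doubleSeries c x y)) :=
    (continuousOn_doubleSeries hc hs hy.le x (mem_closedBall_zero_iff.2 hx)).tendsto.comp
      (tendsto_nhdsWithin_iff.2 ⟨hvx, Filter.Eventually.of_forall fun n =>
        mem_closedBall_zero_iff.2 (hv n).le⟩)
  have hD := ((differentiable_zDen (unparam y)).continuous.tendsto h).comp hvh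
  have hN := ((differentiable_zNum w (unparam y)).continuous.tendsto h).comp hvh
  refine tendsto_nhds_unique ((hG.const_mul 10).mul hD) (hN.congr fun n => ?_)
  exact (doubleSeries_mul_zDen hδ hδ1 hc H (hv n) hy).symm

lemma Ahat_one_sub (k : ℂ) : Ahat (1 - k) = (1 / 10) * ((((3 : ℝ) / 2) ^ ((7 : ℝ) / 3) : ℝ) : ℂ)
    * (4 + 2 * k + 3 * k ^ 2) / (1 + k + k ^ 2) ^ 2 := by
  unfold Ahat
  congr 1 <;> ring

lemma Ahat_one_sub_ne_zero {k : ℂ} (hk : k ∈ sector) : Ahat (1 - k) ≠ 0 := by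
  rw [Ahat_one_sub]
  have h1 : (((3 : ℝ) / 2) ^ ((7 : ℝ) / 3) : ℝ) ≠ 0 := by positivity
  have h2 : 4 + 2 * k + 3 * k ^ 2 ≠ 0 := by
    intro h
    have h' := congrArg Complex.re h
    have h2 := re_mul_nonneg hk hk
    rw [show 4 + 2 * k + 3 * k ^ 2 = ((4 : ℝ) : ℂ) + ((2 : ℝ) : ℂ) * k + ((3 : ℝ) : ℂ) * (k * k)
      by push_cast; ring] at h'
    simp only [Complex.add_re, Complex.re_ofReal_mul, Complex.ofReal_re, Complex.zero_re] at h'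
    linarith [hk.1]
  exact div_ne_zero (mul_ne_zero (mul_ne_zero (by norm_num) (Complex.ofReal_ne_zero.2 h1)) h2)
    (pow_ne_zero 2 (one_add_add_sq_ne_zero hk))

lemma differentiableAt_Ahat_one_sub {k : ℂ} (hk : k ∈ sector) :
    DifferentiableAt ℂ (fun k => Ahat (1 - k)) k := by
  have e : (fun k => Ahat (1 - k)) = fun k : ℂ =>
      (1 / 10) * ((((3 : ℝ) / 2) ^ ((7 : ℝ) / 3) : ℝ) : ℂ)
        * (4 + 2 * k + 3 * k ^ 2) / (1 + k + k ^ 2) ^ 2 := funext Ahat_one_sub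
  rw [e]
  exact DifferentiableAt.div (by fun_prop) (by fun_prop)
    (pow_ne_zero 2 (one_add_add_sq_ne_zero hk))

/-- A nonnegative power series agreeing with `Â ∘ û⁻¹` near the origin converges absolutely on
the closed disc, with boundary values given by the parametrization. -/
lemma hasSum_Ahat {α : ℕ → ℝ} (hα : ∀ n, 0 ≤ α n)
    (H : ∀ᶠ y in nhds (0 : ℂ), HasSum (fun n => (α n : ℂ) * y ^ n) (Ahat (1 - unparam y))) :
    Summable α ∧ ∀ {x h : ℂ}, ‖x‖ ≤ 1 → h ∈ sector → ∀ {v : ℕ → ℂ}, (∀ n, ‖v n‖ < 1) →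
      Filter.Tendsto v Filter.atTop (nhds x) →
      Filter.Tendsto (fun n => unparam (v n)) Filter.atTop (nhds h) →
      ∑' n, (α n : ℂ) * x ^ n = Ahat (1 - h) := by
  have hD : DifferentiableOn ℂ (fun x => Ahat (1 - unparam x)) (Metric.ball 0 1) := by
    intro x hx
    have := (differentiableAt_Ahat_one_sub
      (unparam_mem_compact (mem_ball_zero_iff.1 hx)).1).comp_differentiableWithinAt x
      (differentiableOn_unparam x hx)
    exact this
  obtain ⟨M, hM⟩ := exists_bound_comp_unparam (f := fun k => Ahat (1 - k))
    fun k hk => (differentiableAt_Ahat_one_sub hk.1).continuousAt.continuousWithinAt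
  have hs := summable_of_bounded_of_nonneg hD hM hα H
  refine ⟨hs, fun {x h} hx hh {v} hv hvx hvh => ?_⟩
  have hcont : ContinuousOn (fun x : ℂ => ∑' n, (α n : ℂ) * x ^ n) (Metric.closedBall 0 1) := by
    refine continuousOn_tsum (fun n => by fun_prop) hs fun n x hx => ?_
    rw [norm_mul, norm_pow, Complex.norm_real, Real.norm_of_nonneg (hα n)]
    exact mul_le_of_le_one_right (hα n)
      (pow_le_one₀ (norm_nonneg x) (mem_closedBall_zero_iff.1 hx))
  have h1 := (hcont x (mem_closedBall_zero_iff.2 hx)).tendsto.comp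
    (tendsto_nhdsWithin_iff.2 ⟨hvx, Filter.Eventually.of_forall fun n =>
      mem_closedBall_zero_iff.2 (hv n).le⟩)
  have h2 := (differentiableAt_Ahat_one_sub hh).continuousAt.tendsto.comp hvh
  refine tendsto_nhds_unique h1 (h2.congr fun n => ?_)
  have e := eq_taylorCoeff_of_hasSum hD H
  have := hasSum_taylorCoeff hD (hv n)
  rw [← e] at this
  exact this.tsum_eq.symm

lemma singular_constant_eq (h : ℂ) :
    3 / 20 * (4 + 2 * h + 3 * h ^ 2) / (1 + h + h ^ 2) ^ 2 / cubeRootFactor 0 ^ 4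
      = Ahat (1 - h) := by
  have h1 : ((3 : ℝ) / 2) ^ ((7 : ℝ) / 3) * (((2 : ℝ) / 3) ^ ((1 : ℝ) / 3)) ^ 4 = 3 / 2 := by
    rw [← Real.rpow_natCast, ← Real.rpow_mul (by norm_num),
      show (2 : ℝ) / 3 = (3 / 2)⁻¹ by norm_num, Real.inv_rpow (by norm_num),
      ← Real.rpow_neg (by norm_num), ← Real.rpow_add (by norm_num)]
    norm_num
  have h2 : ((((3 : ℝ) / 2) ^ ((7 : ℝ) / 3) : ℝ) : ℂ) * cubeRootFactor 0 ^ 4 = 3 / 2 := by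
    rw [cubeRootFactor_zero, ← Complex.ofReal_pow, ← Complex.ofReal_mul, h1]
    norm_num
  have h3 : cubeRootFactor 0 ^ 4 ≠ 0 := by
    intro h0
    rw [h0, mul_zero] at h2
    norm_num at h2
  rw [Ahat_one_sub, div_eq_iff h3]
  linear_combination (-(1 / 10) * (4 + 2 * h + 3 * h ^ 2) / (1 + h + h ^ 2) ^ 2) * h2

lemma hasSum_doubleSeries_fiberwise {c : ℕ → ℕ → ℝ} (hc : ∀ p q, 0 ≤ c p q)
    (hs : Summable fun pq : ℕ × ℕ => c pq.1 pq.2) {x y : ℂ} (hx : ‖x‖ ≤ 1) (hy : ‖y‖ ≤ 1) :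
    HasSum (fun q => (∑' p, (c p q : ℂ) * x ^ p) * y ^ q) (doubleSeries c x y) := by
  have h1 : HasSum (fun qp : ℕ × ℕ => (c qp.2 qp.1 : ℂ) * x ^ qp.2 * y ^ qp.1)
      (doubleSeries c x y) :=
    ((Equiv.prodComm ℕ ℕ).hasSum_iff (f := fun pq : ℕ × ℕ =>
      (c pq.1 pq.2 : ℂ) * x ^ pq.1 * y ^ pq.2)).2 (hasSum_doubleSeries hc hs hx hy)
  have h2 : ∀ q, HasSum (fun p => (c p q : ℂ) * x ^ p * y ^ q)
      ((∑' p, (c p q : ℂ) * x ^ p) * y ^ q) := fun q => by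
    have h3 : Summable fun p => c p q :=
      hs.comp_injective (i := fun p : ℕ => (p, q)) fun _ _ h => (Prod.ext_iff.1 h).1
    have h4 : Summable fun p => (c p q : ℂ) * x ^ p := by
      refine Summable.of_norm_bounded h3 fun p => ?_
      rw [norm_mul, norm_pow, Complex.norm_real, Real.norm_of_nonneg (hc p q)]
      exact mul_le_of_le_one_right (hc p q) (pow_le_one₀ (norm_nonneg x) hx)
    exact h4.hasSum.mul_right _
  exact HasSum.prod_fiberwise h1 h2

/-- The coefficient asymptotics in the rescaled variables. -/
lemma tendsto_fiber_coeff {w : ℂ} {c : ℕ → ℕ → ℝ} {δ : ℝ} (hδ : 0 < δ) (hδ1 : δ ≤ 1)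
    (hc : ∀ p q, 0 ≤ c p q) (H : SolvesNearZero w c δ) {x h : ℂ} (hx : ‖x‖ ≤ 1)
    (hh : h ∈ {k | k ∈ sector ∧ ‖k‖ ^ 2 ≤ 3})
    {v : ℕ → ℂ} (hv : ∀ n, ‖v n‖ < 1) (hvx : Filter.Tendsto v Filter.atTop (nhds x))
    (hvh : Filter.Tendsto (fun n => unparam (v n)) Filter.atTop (nhds h)) :
    Filter.Tendsto (fun q : ℕ => (∑' p, (c p q : ℂ) * x ^ p) * (((q : ℝ) ^ (7 / 3 : ℝ) : ℝ) : ℂ))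
      Filter.atTop (nhds (Ahat (1 - h) * (1 / (Real.Gamma (-4 / 3) : ℂ)))) := by
  have hs := summable_of_solvesNearZero hδ hδ1 hc H
  obtain ⟨m, d, b₀, b₁, hm, hd, hd0, hmd, hexp⟩ := exists_singular_expansion w hh
  have := tendsto_coeff_of_singular_expansion (b₀ := b₀) (b₁ := b₁)
    (t := fun q => ∑' p, (c p q : ℂ) * x ^ p) hm hd hd0 fun y hy => by
      have h1 := hasSum_doubleSeries_fiberwise hc hs hx hy.le
      rw [hexp _ (unparam_mem_compact hy) (ne_zero_of_mem_openSector (unparam_mem hy)) _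
        (doubleSeries_mul_zDen_of_tendsto hδ hδ1 hc H hx hy hv hvx hvh), param_unparam hy] at h1
      exact h1
  rwa [hmd, singular_constant_eq] at this

lemma exists_norm_one_sub_unparam_lt {ρ : ℝ} (hρ : 0 < ρ) :
    ∃ δ : ℝ, 0 < δ ∧ δ ≤ 1 ∧ ∀ x : ℂ, ‖x‖ < δ → ‖1 - unparam x‖ < ρ := by
  have h := continuousAt_unparam (x := 0) (by simp)
  obtain ⟨δ, hδ, hlt⟩ := Metric.continuousAt_iff.1 h ρ hρ
  refine ⟨min δ 1, lt_min hδ one_pos, min_le_right _ _, fun x hx => ?_⟩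
  have := hlt (x := x) (by rw [dist_zero_right]; exact hx.trans_le (min_le_left _ _))
  rwa [unparam_zero, dist_comm, dist_eq_norm] at this

/-- for `|u| ≤ u_c`, the series `Z_q(u) = Σ_p z_{p,q} u^p` and
`A(u) = Σ_p a_p u^p` converge absolutely, and `Z_q(u) ~ (A(u)/Γ(−4/3)) u_c^{−q} q^{−7/3}`
as `q → ∞`. -/
theorem statement2
    (ρ : ℝ) (hρ : 0 < ρ)
    (z : ℕ → ℕ → ℝ) (hz_nonneg : ∀ p q, 0 ≤ z p q)
    -- `z p 0` are the Taylor coefficients of `Z₀ = Ẑ₀ ∘ û⁻¹` at `0`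
    (hz0 : ∀ H : ℂ, ‖H‖ < ρ →
      HasSum (fun p : ℕ => (z p 0 : ℂ) * uhat H ^ p) (Z0hat H))
    -- `z p q` are the Taylor coefficients at `(0,0)` of the solution `Z(u,v)` of the
    -- algebraic equation, expressed through the parametrization `u = û(H)`, `v = û(K)`
    (hZ : ∀ H K : ℂ, ‖H‖ < ρ → ‖K‖ < ρ → ∃ ZHK : ℂ,
      HasSum (fun pq : ℕ × ℕ => (z pq.1 pq.2 : ℂ) * uhat H ^ pq.1 * uhat K ^ pq.2) ZHK ∧
      ((nuc : ℂ) * uhat K * uhat H - uhat H ^ 2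
          - ((nuc : ℂ) ^ 2 - 1) * (tc : ℂ) * uhat K * (Z0hat H + uhat H * Z1hat K))
          * (ZHK - Z0hat K)
        = uhat H ^ 2 * (Z0hat K - Z0hat H)
          + ((nuc : ℂ) ^ 2 - 1) * uhat H * uhat K * (uhat H ^ 2 - (tc : ℂ) * Z0hat H * Z1hat K))
    (a : ℕ → ℝ) (ha_pos : ∀ p, 0 < a p)
    -- `a p` are the Taylor coefficients of `A = Â ∘ û⁻¹` at `0`
    (hA : ∀ H : ℂ, ‖H‖ < ρ →
      HasSum (fun p : ℕ => (a p : ℂ) * uhat H ^ p) (Ahat H))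
    :
    ∀ u : ℂ, ‖u‖ ≤ uc →
      (∀ q : ℕ, Summable (fun p : ℕ => ‖(z p q : ℂ) * u ^ p‖)) ∧
      Summable (fun p : ℕ => ‖(a p : ℂ) * u ^ p‖) ∧
      Asymptotics.IsEquivalent Filter.atTop
        (fun q : ℕ => ∑' p : ℕ, (z p q : ℂ) * u ^ p)
        (fun q : ℕ => ((∑' p : ℕ, (a p : ℂ) * u ^ p) / (Real.Gamma (-4/3) : ℂ))
          * (((uc : ℂ)) ^ q)⁻¹ * (((q : ℝ) ^ (-(7:ℝ)/3) : ℝ) : ℂ)) := by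
  intro u hu
  obtain ⟨δ, hδ, hδ1, hδρ⟩ := exists_norm_one_sub_unparam_lt hρ
  have hU : (uc : ℂ) ≠ 0 := by exact_mod_cast uc_pos.ne'
  have huhat : ∀ x : ℂ, ‖x‖ < δ → uhat (1 - unparam x) = uc * x := fun x hx => by
    rw [uhat_one_sub, param_unparam (hx.trans_le hδ1)]
  set c : ℕ → ℕ → ℝ := fun p q => z p q * uc ^ p * uc ^ q with hcdef
  have hc : ∀ p q, 0 ≤ c p q := fun p q =>
    mul_nonneg (mul_nonneg (hz_nonneg p q) (pow_nonneg uc_pos.le p)) (pow_nonneg uc_pos.le q)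
  have hsolve : SolvesNearZero (Real.sqrt 7) c δ := by
    intro x y hx hy
    obtain ⟨Z, hsum, hE⟩ := hZ _ _ (hδρ x hx) (hδρ y hy)
    have hcub : ∀ x : ℂ, ‖x‖ < δ →
        3 + 3 * unparam x + 3 * unparam x ^ 2 + unparam x ^ 3 ≠ 0 := fun x hx => by
      simpa using cubic_ne_zero_of_mem_sector (unparam_mem_compact (hx.trans_le hδ1)).1
        (r := 3) (s := 3) (by norm_num) (by norm_num)
    refine ⟨Z, hsum.congr_fun fun pq => ?_, kernel_equation (hcub x hx) (hcub y hy) hE⟩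
    rw [huhat x hx, huhat y hy, hcdef]
    push_cast
    ring
  have hs := summable_of_solvesNearZero hδ hδ1 hc hsolve
  have hAsum := hasSum_Ahat (α := fun p => a p * uc ^ p)
    (fun p => mul_nonneg (ha_pos p).le (pow_nonneg uc_pos.le p)) (by
      filter_upwards [Metric.ball_mem_nhds (0 : ℂ) hδ] with x hx
      have hx := mem_ball_zero_iff.1 hx
      refine (hA _ (hδρ x hx)).congr_fun fun p => ?_
      rw [huhat x hx]
      push_cast
      ring)
  obtain ⟨x, rfl⟩ : ∃ x, u = uc * x := ⟨u / uc, by field_simp⟩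
  have hx : ‖x‖ ≤ 1 := by
    rw [norm_mul, Complex.norm_real, Real.norm_of_nonneg uc_pos.le] at hu
    exact le_of_mul_le_mul_left (by simpa using hu) uc_pos
  obtain ⟨h, hh, v, hv, hvx, hvh⟩ := exists_tendsto_unparam hx
  have hasum : ∑' p, (a p : ℂ) * (uc * x) ^ p = Ahat (1 - h) := by
    rw [← hAsum.2 hx hh.1 hv hvx hvh]
    refine tsum_congr fun p => ?_
    push_cast
    ring
  have hzsum : ∀ q, ∑' p, (c p q : ℂ) * x ^ p
      = (uc : ℂ) ^ q * ∑' p, (z p q : ℂ) * (uc * x) ^ p := fun q => by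
    rw [← tsum_mul_left]
    refine tsum_congr fun p => ?_
    rw [hcdef]
    push_cast
    ring
  have hpow : ∀ p, ‖x‖ ^ p ≤ 1 := fun p => pow_le_one₀ (norm_nonneg x) hx
  refine ⟨fun q => ?_, ?_, ?_⟩
  · have h1 : Summable fun p => c p q :=
      hs.comp_injective (i := fun p : ℕ => (p, q)) fun _ _ h => (Prod.ext_iff.1 h).1
    refine Summable.of_nonneg_of_le (fun _ => norm_nonneg _) (fun p => ?_)
      (h1.mul_right ((uc ^ q)⁻¹))
    rw [norm_mul, norm_pow, norm_mul, Complex.norm_real, Complex.norm_real,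
      Real.norm_of_nonneg uc_pos.le, Real.norm_of_nonneg (hz_nonneg p q), mul_pow, hcdef,
      mul_inv_cancel_right₀ (pow_ne_zero q uc_pos.ne'), ← mul_assoc]
    exact mul_le_of_le_one_right
      (mul_nonneg (hz_nonneg p q) (pow_nonneg uc_pos.le p)) (hpow p)
  · refine Summable.of_nonneg_of_le (fun _ => norm_nonneg _) (fun p => ?_) hAsum.1
    rw [norm_mul, norm_pow, norm_mul, Complex.norm_real, Complex.norm_real,
      Real.norm_of_nonneg uc_pos.le, Real.norm_of_nonneg (ha_pos p).le, mul_pow, ← mul_assoc]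
    exact mul_le_of_le_one_right
      (mul_nonneg (ha_pos p).le (pow_nonneg uc_pos.le p)) (hpow p)
  · have hlim := tendsto_fiber_coeff hδ hδ1 hc hsolve hx hh hv hvx hvh
    have hA0 := Ahat_one_sub_ne_zero hh.1
    have hG : (Real.Gamma (-4 / 3) : ℂ) ≠ 0 := by
      refine Complex.ofReal_ne_zero.2 (Real.Gamma_ne_zero fun m hm => ?_)
      have h3 : ((3 * m : ℕ) : ℝ) = (4 : ℕ) := by push_cast; linarith
      have := Nat.cast_injective h3
      omega
    rw [hasum]
    have hq : ∀ᶠ q : ℕ in Filter.atTop, 0 < q := Filter.eventually_gt_atTop 0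
    have hr : ∀ q : ℕ, 0 < q → (((q : ℝ) ^ (7 / 3 : ℝ) : ℝ) : ℂ) ≠ 0 := fun q hq =>
      Complex.ofReal_ne_zero.2 (Real.rpow_pos_of_pos (by exact_mod_cast hq) _).ne'
    have hinv : ∀ q : ℕ, (((q : ℝ) ^ (-(7 : ℝ) / 3) : ℝ) : ℂ)
        = ((((q : ℝ) ^ (7 / 3 : ℝ) : ℝ) : ℂ))⁻¹ := fun q => by
      rw [neg_div, Real.rpow_neg (Nat.cast_nonneg q), Complex.ofReal_inv]
    rw [Asymptotics.isEquivalent_iff_tendsto_one]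
    · have h1 := hlim.div_const (Ahat (1 - h) * (1 / (Real.Gamma (-4 / 3) : ℂ)))
      rw [div_self (mul_ne_zero hA0 (one_div_ne_zero hG))] at h1
      refine h1.congr' ?_
      filter_upwards [hq] with q hq
      have h2 := hr q hq
      have h3 := pow_ne_zero q hU
      rw [hzsum]
      simp only [Pi.div_apply, hinv]
      field_simp
    · filter_upwards [hq] with q hq
      rw [hinv]
      exact mul_ne_zero (mul_ne_zero (div_ne_zero hA0 hG) (inv_ne_zero (pow_ne_zero q hU)))
        (inv_ne_zero (hr q hq))
end

section
/- There exist an open neighborhood V of 0 in ℂ with 1 ∈ ∂V and ε > 0 such that the restriction of û to V is a conformal bijection from V onto the slit disk at u_c of margin ε, and û(H) → u_c as H tends to 1 within V. -/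
/-- The slit disk at `x > 0` of margin `ε > 0`: the open disk of radius `x + ε`
centred at `0`, minus the real segment `[x, x + ε]`. -/
def slitDisk (x ε : ℝ) : Set ℂ :=
  Metric.ball (0 : ℂ) (x + ε) \ (Complex.ofReal '' Set.Icc x (x + ε))

/-- A logarithm of `w ^ 3 * (2 + w)` on the right half-plane. -/
noncomputable def cubicLog (w : ℂ) : ℂ := 3 * Complex.log w + Complex.log (2 + w)

/-- The part of the right half-plane on which `cubicLog` takes values in the principal strip. -/
def cubicSector : Set ℂ := {w | 0 < w.re ∧ |(cubicLog w).im| < Real.pi}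

lemma exp_cubicLog {w : ℂ} (h0 : w ≠ 0) (h2 : 2 + w ≠ 0) :
    Complex.exp (cubicLog w) = w ^ 3 * (2 + w) := by
  have h : Complex.exp (3 * Complex.log w) = Complex.exp (Complex.log w) ^ 3 := by
    rw [← Complex.exp_nat_mul]; norm_num
  rw [cubicLog, Complex.exp_add, h, Complex.exp_log h0, Complex.exp_log h2]

lemma ne_zero_of_re_pos {w : ℂ} (hw : 0 < w.re) : w ≠ 0 := by
  rintro rfl; simp at hw

lemma two_add_re_pos {w : ℂ} (hw : 0 ≤ w.re) : 0 < (2 + w).re := by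
  simp only [Complex.add_re, Complex.re_ofNat]; linarith

lemma exp_cubicLog_of_re_pos {w : ℂ} (hw : 0 < w.re) :
    Complex.exp (cubicLog w) = w ^ 3 * (2 + w) :=
  exp_cubicLog (ne_zero_of_re_pos hw) (ne_zero_of_re_pos (two_add_re_pos hw.le))

lemma mem_slitPlane_of_re_nonneg {w : ℂ} (hw : 0 ≤ w.re) (h0 : w ≠ 0) :
    w ∈ Complex.slitPlane := by
  rw [Complex.mem_slitPlane_iff]
  by_contra! h
  exact h0 (Complex.ext (le_antisymm h.1 hw) h.2)

lemma hasStrictDerivAt_cubicLog {w : ℂ} (hw : 0 ≤ w.re) (h0 : w ≠ 0) :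
    HasStrictDerivAt cubicLog (3 * w⁻¹ + (2 + w)⁻¹) w := by
  have h1 := (Complex.hasStrictDerivAt_log (mem_slitPlane_of_re_nonneg hw h0)).const_mul 3
  have h2 := ((hasStrictDerivAt_id w).const_add 2).clog
    (Or.inl (two_add_re_pos hw) : 2 + w ∈ Complex.slitPlane)
  rw [one_div] at h2
  exact h1.add h2

lemma re_inv_pos {w : ℂ} (hw : 0 < w.re) : 0 < (w⁻¹).re := by
  rw [Complex.inv_re]
  exact div_pos hw (Complex.normSq_pos.2 (ne_zero_of_re_pos hw))

lemma re_deriv_cubicLog_pos {w : ℂ} (hw : 0 < w.re) : 0 < (3 * w⁻¹ + (2 + w)⁻¹).re := by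
  have h1 := re_inv_pos hw
  have h2 := re_inv_pos (two_add_re_pos hw.le)
  simp only [Complex.add_re, Complex.mul_re, Complex.re_ofNat, Complex.im_ofNat]
  linarith

/-- A function on a convex set whose derivative has positive real part is injective. -/
lemma Convex.injOn_of_re_deriv_pos {s : Set ℂ} (hs : Convex ℝ s) {f f' : ℂ → ℂ}
    (hf : ∀ z ∈ s, HasDerivAt f (f' z) z) (hf' : ∀ z ∈ s, 0 < (f' z).re) : Set.InjOn f s := by
  intro a ha b hb hab
  by_contra hne
  have hd : b - a ≠ 0 := sub_ne_zero.2 (Ne.symm hne)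
  have hmem : ∀ t ∈ Set.Icc (0 : ℝ) 1, a + (t : ℂ) * (b - a) ∈ s := fun t ht => by
    simpa using hs.add_smul_sub_mem ha hb ht
  have hder : ∀ t ∈ Set.Icc (0 : ℝ) 1,
      HasDerivAt (fun t : ℝ => (f (a + (t : ℂ) * (b - a)) / (b - a)).re)
        (f' (a + (t : ℂ) * (b - a))).re t := by
    intro t ht
    have h1 : HasDerivAt (fun z : ℂ => a + z * (b - a)) (b - a) (t : ℂ) := by
      simpa using ((hasDerivAt_id (t : ℂ)).mul_const (b - a)).const_add a
    have h2 := ((hf _ (hmem t ht)).comp (t : ℂ) h1).div_const (b - a)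
    rw [mul_div_cancel_right₀ _ hd] at h2
    exact h2.real_of_complex
  obtain ⟨c, hc, hc'⟩ := exists_hasDerivAt_eq_slope _ _ zero_lt_one
    (fun t ht => (hder t ht).continuousAt.continuousWithinAt)
    (fun t ht => hder t (Set.Ioo_subset_Icc_self ht))
  have := hf' _ (hmem c (Set.Ioo_subset_Icc_self hc))
  rw [hc'] at this
  simp [hab] at this

lemma injOn_cubicLog : Set.InjOn cubicLog {w | 0 < w.re} :=
  (convex_halfSpace_re_gt 0).injOn_of_re_deriv_pos
    (fun _ hz => (hasStrictDerivAt_cubicLog (le_of_lt hz) (ne_zero_of_re_pos hz)).hasDerivAt)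
    (fun _ hz => re_deriv_cubicLog_pos hz)

lemma isOpen_cubicSector : IsOpen cubicSector := by
  have hc : ContinuousOn (fun w => |(cubicLog w).im|) {w : ℂ | 0 < w.re} := fun w hw =>
    ((Complex.continuous_im.continuousAt.comp
      (hasStrictDerivAt_cubicLog (le_of_lt hw) (ne_zero_of_re_pos hw)).hasDerivAt.continuousAt).abs
        ).continuousWithinAt
  exact hc.isOpen_inter_preimage (isOpen_lt continuous_const Complex.continuous_re) isOpen_Iio

lemma isOpen_image_cubicLog : IsOpen (cubicLog '' cubicSector) := by
  rw [isOpen_iff_mem_nhds]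
  rintro _ ⟨w, hw, rfl⟩
  have hd := hasStrictDerivAt_cubicLog hw.1.le (ne_zero_of_re_pos hw.1)
  have h0 := ne_zero_of_re_pos (re_deriv_cubicLog_pos hw.1)
  rw [← hd.map_nhds_eq h0]
  exact Filter.image_mem_map (isOpen_cubicSector.mem_nhds hw)

/-- On the imaginary axis `cubicLog` lies outside the principal strip. -/
lemma pi_le_abs_im_cubicLog {w : ℂ} (hw : w.re = 0) (h0 : w ≠ 0) :
    Real.pi ≤ |(cubicLog w).im| := by
  have him : w.im ≠ 0 := fun h => h0 (Complex.ext hw h)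
  have e : (cubicLog w).im = 3 * w.arg + (2 + w).arg := by
    simp [cubicLog, Complex.log_im]
  have hpi := Real.pi_pos
  rw [e]
  rcases him.lt_or_gt with h | h
  · rw [Complex.arg_eq_neg_pi_div_two_iff.2 ⟨hw, h⟩]
    have : (2 + w).arg < 0 := Complex.arg_neg_iff.2 (by simpa using h)
    exact le_abs.2 (Or.inr (by linarith))
  · rw [Complex.arg_eq_pi_div_two_iff.2 ⟨hw, h⟩]
    have : 0 ≤ (2 + w).arg := Complex.arg_nonneg_iff.2 (by simpa using h.le)
    exact le_abs.2 (Or.inl (by linarith))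

lemma norm_le_of_re_pos {w : ℂ} (hw : 0 < w.re) : ‖w‖ ≤ 1 + ‖w ^ 3 * (2 + w)‖ := by
  have h2 : 1 ≤ ‖2 + w‖ := by
    have := Complex.re_le_norm (2 + w)
    simp only [Complex.add_re, Complex.re_ofNat] at this
    linarith
  rw [norm_mul, norm_pow]
  have h3 : ‖w‖ ^ 3 ≤ ‖w‖ ^ 3 * ‖2 + w‖ := le_mul_of_one_le_right (by positivity) h2
  rcases le_total ‖w‖ 1 with h | h
  · have : 0 ≤ ‖w‖ ^ 3 := by positivity
    linarith
  · have := le_self_pow₀ h (three_ne_zero)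
    linarith

lemma closure_image_cubicLog_inter_subset :
    closure (cubicLog '' cubicSector) ∩ {ζ | |ζ.im| < Real.pi} ⊆ cubicLog '' cubicSector := by
  rintro ζ ⟨hζ, hstrip⟩
  obtain ⟨v, hv, hlim⟩ := mem_closure_iff_seq_limit.1 hζ
  choose w hw hwv using hv
  have hexp : Filter.Tendsto (fun n => w n ^ 3 * (2 + w n)) Filter.atTop
      (nhds (Complex.exp ζ)) := by
    refine ((Complex.continuous_exp.tendsto ζ).comp hlim).congr fun n => ?_
    rw [Function.comp_apply, ← hwv n, exp_cubicLog_of_re_pos (hw n).1]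
  obtain ⟨M, hM⟩ := hexp.norm.bddAbove_range
  have hball : ∀ n, w n ∈ Metric.closedBall (0 : ℂ) (1 + M) := fun n => by
    rw [mem_closedBall_zero_iff]
    have := hM (Set.mem_range_self n)
    have := norm_le_of_re_pos (hw n).1
    linarith
  obtain ⟨a, -, φ, hφ, ha⟩ := (isCompact_closedBall (0 : ℂ) (1 + M)).tendsto_subseq hball
  have hare : 0 ≤ a.re :=
    ge_of_tendsto' ((Complex.continuous_re.tendsto a).comp ha) fun n => (hw (φ n)).1.le
  have haexp : a ^ 3 * (2 + a) = Complex.exp ζ :=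
    tendsto_nhds_unique ((ha.pow 3).mul (ha.const_add 2)) (hexp.comp hφ.tendsto_atTop)
  have ha0 : a ≠ 0 := by
    rintro rfl
    exact Complex.exp_ne_zero ζ (by simp [← haexp])
  have hga : cubicLog a = ζ := by
    refine tendsto_nhds_unique
      ((hasStrictDerivAt_cubicLog hare ha0).hasDerivAt.continuousAt.tendsto.comp ha)
      ((hlim.comp hφ.tendsto_atTop).congr fun n => ?_)
    exact (hwv (φ n)).symm
  have hapos : 0 < a.re := by
    refine lt_of_le_of_ne hare fun h => ?_
    have := pi_le_abs_im_cubicLog h.symm ha0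
    rw [hga] at this
    exact absurd hstrip (not_lt.2 this)
  exact ⟨a, ⟨hapos, by rw [hga]; exact hstrip⟩, hga⟩

lemma im_cubicLog_ofReal {x : ℝ} (hx : 0 < x) : (cubicLog x).im = 0 := by
  have h : (2 + (x : ℂ)) = ((2 + x : ℝ) : ℂ) := by push_cast; rfl
  rw [cubicLog, h, ← Complex.ofReal_log hx.le, ← Complex.ofReal_log (by linarith)]
  simp

lemma ofReal_mem_cubicSector {x : ℝ} (hx : 0 < x) : (x : ℂ) ∈ cubicSector :=
  ⟨by simpa using hx, by simpa [im_cubicLog_ofReal hx] using Real.pi_pos⟩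

/-- `cubicLog` maps its sector onto the whole principal strip. -/
lemma strip_subset_image_cubicLog :
    {ζ : ℂ | |ζ.im| < Real.pi} ⊆ cubicLog '' cubicSector := by
  have hconv : Convex ℝ {ζ : ℂ | |ζ.im| < Real.pi} := by
    have : {ζ : ℂ | |ζ.im| < Real.pi} = {ζ | -Real.pi < ζ.im} ∩ {ζ | ζ.im < Real.pi} := by
      ext ζ; exact abs_lt (a := ζ.im)
    rw [this]
    exact (convex_halfSpace_im_gt _).inter (convex_halfSpace_im_lt _)
  have h1 := ofReal_mem_cubicSector one_pos
  exact hconv.isPreconnected.subset_of_closure_inter_subset isOpen_image_cubicLog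
    ⟨_, h1.2, Set.mem_image_of_mem _ h1⟩ closure_image_cubicLog_inter_subset

lemma uhat_eq (H : ℂ) : uhat H = uc * (1 - (1 - H) ^ 3 * (2 + (1 - H)) / 3) := by
  unfold uhat; ring

lemma uhat_eq_exp {H : ℂ} (hH : 1 - H ∈ cubicSector) :
    uhat H = uc * (1 - Complex.exp (cubicLog (1 - H)) / 3) := by
  rw [exp_cubicLog_of_re_pos hH.1, uhat_eq]

lemma uhat_one : uhat 1 = uc := by
  simp [uhat_eq]

lemma continuous_uhat : Continuous uhat := by
  unfold uhat; fun_prop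

lemma deriv_uhat (H : ℂ) :
    deriv uhat H = uc / 3 * (2 * (1 - H) ^ 2 * (3 + 2 * (1 - H))) := by
  have hw : HasDerivAt (fun z : ℂ => 1 - z) (-1) H := by
    simpa using (hasDerivAt_id H).const_sub 1
  have h := ((((hw.pow 3).mul (hw.const_add 2)).div_const 3).const_sub 1).const_mul (uc : ℂ)
  have e : uhat = fun z => (uc : ℂ) * (1 - (1 - z) ^ 3 * (2 + (1 - z)) / 3) := funext uhat_eq
  rw [e]
  refine (h.deriv).trans ?_
  simp
  ring

lemma deriv_uhat_ne_zero {H : ℂ} (hH : 0 < (1 - H).re) : deriv uhat H ≠ 0 := by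
  have h3 : 0 < (3 + 2 * (1 - H)).re := by
    simp only [Complex.add_re, Complex.mul_re, Complex.re_ofNat, Complex.im_ofNat]
    linarith
  rw [deriv_uhat]
  exact mul_ne_zero (div_ne_zero (Complex.ofReal_ne_zero.2 uc_pos.ne') three_ne_zero)
    (mul_ne_zero (mul_ne_zero two_ne_zero (pow_ne_zero 2 (ne_zero_of_re_pos hH)))
      (ne_zero_of_re_pos h3))

lemma uhat_ne_ofReal {H : ℂ} (hH : 1 - H ∈ cubicSector) {x : ℝ} (hx : uc ≤ x) :
    uhat H ≠ x := by
  intro h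
  have hu : (uc : ℂ) ≠ 0 := Complex.ofReal_ne_zero.2 uc_pos.ne'
  have hexp : Complex.exp (cubicLog (1 - H)) = ((3 * (1 - x / uc) : ℝ) : ℂ) := by
    rw [uhat_eq_exp hH] at h
    push_cast
    rw [← h]
    field_simp
    ring
  have hlog : Complex.log (Complex.exp (cubicLog (1 - H))) = cubicLog (1 - H) :=
    Complex.log_exp (abs_lt.1 hH.2).1 (abs_lt.1 hH.2).2.le
  have him := congrArg Complex.im hlog
  rw [Complex.log_im] at him
  have hslit : Complex.exp (cubicLog (1 - H)) ∈ Complex.slitPlane :=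
    Complex.mem_slitPlane_iff_arg.2
      ⟨him ▸ (abs_lt.1 hH.2).2.ne, Complex.exp_ne_zero _⟩
  rw [hexp, Complex.ofReal_mem_slitPlane] at hslit
  have : 1 ≤ x / uc := (one_le_div uc_pos).2 hx
  linarith

lemma injOn_uhat : Set.InjOn uhat {H | 1 - H ∈ cubicSector} := by
  intro a ha b hb hab
  have hu : (uc : ℂ) ≠ 0 := Complex.ofReal_ne_zero.2 uc_pos.ne'
  rw [uhat_eq_exp ha, uhat_eq_exp hb] at hab
  have h : Complex.exp (cubicLog (1 - a)) = Complex.exp (cubicLog (1 - b)) := by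
    linear_combination (-3) * mul_left_cancel₀ hu hab
  have h' := Complex.exp_inj_of_neg_pi_lt_of_le_pi (abs_lt.1 ha.2).1 (abs_lt.1 ha.2).2.le
    (abs_lt.1 hb.2).1 (abs_lt.1 hb.2).2.le h
  linear_combination -injOn_cubicLog ha.1 hb.1 h'

/-- Every point off the ray `[uc, ∞)` is attained by `uhat` on the sector. -/
lemma exists_uhat_eq {z : ℂ} (hz : ∀ x : ℝ, uc ≤ x → z ≠ x) :
    ∃ H, 1 - H ∈ cubicSector ∧ uhat H = z := by
  have hu : (uc : ℂ) ≠ 0 := Complex.ofReal_ne_zero.2 uc_pos.ne'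
  have hslit : 3 * (1 - z / uc) ∈ Complex.slitPlane := by
    rw [Complex.mem_slitPlane_iff]
    by_contra! h
    obtain ⟨hre, him⟩ := h
    simp only [Complex.mul_re, Complex.re_ofNat, Complex.im_ofNat, Complex.sub_re,
      Complex.one_re, Complex.div_ofReal_re] at hre
    simp only [Complex.mul_im, Complex.re_ofNat, Complex.im_ofNat, Complex.sub_im,
      Complex.one_im, Complex.div_ofReal_im] at him
    have hle : uc ≤ z.re := (one_le_div uc_pos).1 (by linarith)
    have hzero : z.im = 0 := by
      have : z.im / uc = 0 := by linarith
      simpa [uc_pos.ne'] using this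
    exact hz z.re hle (Complex.ext rfl (by simpa using hzero))
  have hstrip : |(Complex.log (3 * (1 - z / uc))).im| < Real.pi := by
    rw [Complex.log_im]
    exact abs_lt.2 ⟨Complex.neg_pi_lt_arg _, lt_of_le_of_ne (Complex.arg_le_pi _)
      (Complex.mem_slitPlane_iff_arg.1 hslit).1⟩
  obtain ⟨w, hw, hlog⟩ := strip_subset_image_cubicLog hstrip
  have hw' : 1 - (1 - w) ∈ cubicSector := by simpa using hw
  refine ⟨1 - w, hw', ?_⟩
  rw [uhat_eq_exp hw', sub_sub_cancel, hlog, Complex.exp_log (Complex.slitPlane_ne_zero hslit)]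
  field_simp
  ring

/-- there is an open neighborhood `V` of `0` with `1 ∈ ∂V` such that `û`
restricted to `V` is a conformal bijection onto a slit disk at `u_c`, and `û(H) → u_c`
as `H → 1` within `V`. -/
theorem statement4 :
    ∃ (V : Set ℂ) (ε : ℝ), IsOpen V ∧ (0 : ℂ) ∈ V ∧ (1 : ℂ) ∈ frontier V ∧ 0 < ε ∧
      Set.BijOn uhat V (slitDisk uc ε) ∧
      (∀ s ∈ V, deriv uhat s ≠ 0) ∧
      Filter.Tendsto uhat (nhdsWithin (1 : ℂ) V) (nhds ((uc : ℝ) : ℂ)) := by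
  have hopen : IsOpen {H | 1 - H ∈ cubicSector ∧ ‖uhat H‖ < uc + 1} :=
    (isOpen_cubicSector.preimage (continuous_const.sub continuous_id)).inter
      (isOpen_lt continuous_uhat.norm continuous_const)
  refine ⟨{H | 1 - H ∈ cubicSector ∧ ‖uhat H‖ < uc + 1}, 1, hopen, ?_, ?_, one_pos,
    ⟨?_, fun a ha b hb hab => injOn_uhat ha.1 hb.1 hab, ?_⟩,
    fun s hs => deriv_uhat_ne_zero hs.1.1, ?_⟩
  · refine ⟨by simpa using ofReal_mem_cubicSector one_pos, ?_⟩
    simpa [uhat] using add_pos uc_pos one_pos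
  · rw [hopen.frontier_eq]
    refine ⟨?_, fun h => by simpa using h.1.1⟩
    have hc : Continuous fun x : ℝ => (1 - (x : ℂ)) := by fun_prop
    have hlim : Filter.Tendsto (fun x : ℝ => (1 - (x : ℂ))) (nhdsWithin 0 (Set.Ioi 0))
        (nhds 1) := by
      simpa using (hc.tendsto 0).mono_left nhdsWithin_le_nhds
    have hnear : ∀ᶠ H in nhds (1 : ℂ), ‖uhat H‖ < uc + 1 := by
      refine (isOpen_lt continuous_uhat.norm continuous_const).mem_nhds ?_
      simp [uhat_one, abs_of_pos uc_pos]
    refine mem_closure_of_tendsto hlim ?_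
    filter_upwards [hlim.eventually hnear, self_mem_nhdsWithin] with x hx hx0
    exact ⟨by simpa using ofReal_mem_cubicSector hx0, hx⟩
  · rintro H ⟨hH, hn⟩
    refine ⟨by simpa using hn, ?_⟩
    rintro ⟨x, hx, h⟩
    exact uhat_ne_ofReal hH hx.1 h.symm
  · rintro z ⟨hz, hz'⟩
    rw [mem_ball_zero_iff] at hz
    obtain ⟨H, hH, rfl⟩ := exists_uhat_eq (z := z) fun x hx h => hz' ⟨x, ⟨hx, by
      rw [h, Complex.norm_real] at hz
      exact (le_abs_self x).trans hz.le⟩, h.symm⟩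
    exact ⟨H, ⟨hH, hz⟩, rfl⟩
  · simpa [uhat_one] using (continuous_uhat.tendsto 1).mono_left nhdsWithin_le_nhds
end
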